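/- Let S be a finite alphabet with complementation and let V, W ⊆ S^d be equivalent polybox codes such that neither V nor W contains a twin pair, V ∩ W = ∅, and V ≠ ∅. Then |V| ≥ 12. -/

import Mathlib

/-- `ES` is the set of all `B ⊆ S` containing exactly one letter from each
complementary pair `{s, s'}`. -/
def ESet {S : Type*} (c : S → S) : Set (Set S) :=
  {B | ∀ s, s ∈ B ↔ c s ∉ B}

/-- `Es = {B ∈ ES : s ∈ B}`. -/
def Eltr {S : Type*} (c : S → S) (s : S) : Set (Set S) :=
  {B | B ∈ ESet c ∧ s ∈ B}

/-- The equicomplementary realization `v̌ = Ev₁ × ⋯ × Ev_d` of a word `v ∈ S^d`,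
viewed as a box in the `d`-box `(ES)^d`. -/
def realize {S : Type*} (c : S → S) {d : ℕ} (v : Fin d → S) :
    Set (Fin d → Set S) :=
  {B | ∀ i, B i ∈ Eltr c (v i)}

/-- Words `u, v ∈ S^d` are dichotomous: some coordinate carries complementary
letters. -/
def Dichotomous {S : Type*} (c : S → S) {d : ℕ} (u v : Fin d → S) : Prop :=
  ∃ j, v j = c (u j)

/-- Words `u, v ∈ S^d` form a twin pair. -/
def TwinPair {S : Type*} (c : S → S) {d : ℕ} (u v : Fin d → S) : Prop :=
  ∃ j, v j = c (u j) ∧ ∀ i, i ≠ j → u i = v i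

/-- A polybox code: a set of pairwise dichotomous words. -/
def PolyboxCode {S : Type*} (c : S → S) {d : ℕ} (V : Set (Fin d → S)) : Prop :=
  ∀ u ∈ V, ∀ v ∈ V, u ≠ v → Dichotomous c u v

/-- Polybox codes `V, W ⊆ S^d` are equivalent if
`⋃_{v ∈ V} v̌ = ⋃_{w ∈ W} w̌`. -/
def Equivalent {S : Type*} (c : S → S) {d : ℕ}
    (V W : Set (Fin d → S)) : Prop :=
  (⋃ v ∈ V, realize c v) = ⋃ w ∈ W, realize c w

/-- A polybox code `V ⊆ S^d` is rigid if every polybox code equivalent to `V`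
equals `V`. -/
def Rigid {S : Type*} (c : S → S) {d : ℕ} (V : Set (Fin d → S)) : Prop :=
  ∀ W : Set (Fin d → S), PolyboxCode c W → Equivalent c V W → W = V

/-!
Cutting the boxes by a hyperplane `x i = B` with `B ∈ ES` turns equivalent codes into equivalent
codes, consisting of the words whose letter at `i` belongs to `B`, and equivalent codes have the
same size. A box covered by a twin-free code that does not contain its word needs at least five
words.

If words `v ∈ V` and `w ∈ W` agree outside a position `i` and `w i ≠ (v i)'`, choose `B` containing
`v i` and `(w i)'`. Each of the slices of `V` and `W` by `B` and by its complement turns out to have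
at least six words, so `|V| ≥ 12`.

Suppose there is no such pair and `|V| ≤ 11`. Counting the words of `V` and `W` by their letters at
`i` leaves room for at most two complementary pairs `s, s'` and `t, t'` at every position, and both
pairs occur at some position `i`. From each of the two partitions of these letters into
`{s, t}`, `{s', t'}` and into `{s, t'}`, `{s', t}` one of the halves carries at most five words of
`V`. So there are two small halves sharing a letter, say `{s, t}` and `{s, t'}`. Color the words of
a small slice by their original letter at `i`. With at most five words, the coloring forces the two
words of `V` with letter `s` to have twins in a common direction in the slice by `{s, t}`, coming
from words of `V` with letter `t`, and likewise in the slice by `{s, t'}`. Two of the words so found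
differ only by `t` and `t'` at `i`: they are a twin pair of `V`.
-/

open Function
open scoped Finset

/-- A complementation `s ↦ s'` of an alphabet: a fixed-point-free involution. -/
class IsComplementation {S : Type*} (c : S → S) : Prop where
  involutive : Involutive c
  apply_ne (s : S) : c s ≠ s

section Letters

open IsComplementation

variable {S : Type*} {c : S → S} {s t u : S} {B : Set S}

theorem ESet.apply_notMem (hB : B ∈ ESet c) (hs : s ∈ B) : c s ∉ B :=
  (hB s).1 hs

theorem ESet.notMem_of_apply_mem (hB : B ∈ ESet c) (hs : c s ∈ B) : s ∉ B :=
  fun h => (hB s).1 h hs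

theorem ESet.ne_apply_of_mem (hB : B ∈ ESet c) (hs : s ∈ B) (ht : t ∈ B) : t ≠ c s :=
  fun h => (hB s).1 hs (h ▸ ht)

theorem ESet.compl_mem (hB : B ∈ ESet c) : Bᶜ ∈ ESet c :=
  fun s => not_congr (hB s)

variable [IsComplementation c]

theorem IsComplementation.apply_apply (c : S → S) [IsComplementation c] (s : S) : c (c s) = s :=
  involutive s

theorem ne_apply_comm : s ≠ c t ↔ t ≠ c s :=
  (involutive.eq_iff.symm.trans eq_comm).not

theorem exists_mem_ESet_superset {A : Set S} (hA : ∀ s ∈ A, c s ∉ A) : ∃ B ∈ ESet c, A ⊆ B := by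
  obtain ⟨_, -⟩ := exists_wellFoundedLT S
  refine ⟨{s | s ∈ A ∨ c s ∉ A ∧ s < c s}, fun s => ?_, fun s hs => Or.inl hs⟩
  have hcc := apply_apply c s
  have hs := hA s
  have hcs := hA (c s)
  rw [hcc] at hcs
  simp only [Set.mem_ofPred_eq, hcc]
  rcases lt_or_gt_of_ne (apply_ne (c := c) s) with h | h <;> have := h.not_gt <;> tauto

theorem exists_mem_Eltr₃ (hst : t ≠ c s) (hsu : u ≠ c s) (htu : u ≠ c t) :
    ∃ B, B ∈ Eltr c s ∧ B ∈ Eltr c t ∧ B ∈ Eltr c u := by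
  have hts := ne_apply_comm.1 hst
  have hus := ne_apply_comm.1 hsu
  have hut := ne_apply_comm.1 htu
  obtain ⟨B, hB, hsub⟩ := exists_mem_ESet_superset (c := c) (A := {s, t, u}) (by
    have := apply_ne (c := c)
    simp only [Set.mem_insert_iff, Set.mem_singleton_iff]
    grind)
  exact ⟨B, ⟨hB, hsub (by simp)⟩, ⟨hB, hsub (by simp)⟩, ⟨hB, hsub (by simp)⟩⟩

theorem exists_mem_Eltr₂ (hst : t ≠ c s) : ∃ B, B ∈ Eltr c s ∧ B ∈ Eltr c t := by
  obtain ⟨B, hs, ht, -⟩ := exists_mem_Eltr₃ hst hst (apply_ne t).symm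
  exact ⟨B, hs, ht⟩

theorem Eltr_nonempty (s : S) : (Eltr c s).Nonempty := by
  obtain ⟨B, hs, -⟩ := exists_mem_Eltr₂ (apply_ne (c := c) s).symm
  exact ⟨B, hs⟩

end Letters

section Boxes

variable {S : Type*} {c : S → S} {d : ℕ} {i a : Fin d} {s : S} {B : Set S}
  {u v : Fin d → S} {x : Fin d → Set S}

/-- The box `v̌` stretched to the whole axis in direction `i`. No condition is put on `x i`, so
that membership is unaffected by changing `x` at `i`. -/
def cylinder (c : S → S) (i : Fin d) (v : Fin d → S) : Set (Fin d → Set S) :=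
  {x | ∀ a ≠ i, x a ∈ Eltr c (v a)}

theorem mem_realize_iff_mem_cylinder (i : Fin d) :
    x ∈ realize c v ↔ x i ∈ Eltr c (v i) ∧ x ∈ cylinder c i v :=
  ⟨fun h => ⟨h i, fun a _ => h a⟩, fun h a => by
    rcases eq_or_ne a i with rfl | ha
    exacts [h.1, h.2 a ha]⟩

theorem realize_subset_cylinder : realize c v ⊆ cylinder c i v :=
  fun _ h a _ => h a

theorem mem_cylinder_congr (huv : Set.EqOn u v {i}ᶜ) :
    x ∈ cylinder c i u ↔ x ∈ cylinder c i v :=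
  forall₂_congr fun _ ha => by rw [huv ha]

theorem update_mem_cylinder_self : update x i B ∈ cylinder c i v ↔ x ∈ cylinder c i v :=
  forall₂_congr fun a ha => by rw [update_of_ne ha]

theorem update_mem_realize :
    update x i B ∈ realize c v ↔ B ∈ Eltr c (v i) ∧ x ∈ cylinder c i v := by
  rw [mem_realize_iff_mem_cylinder i, update_self, update_mem_cylinder_self]

theorem update_mem_cylinder (hx : x ∈ cylinder c i v) (hB : B ∈ Eltr c (v a)) :
    update x a B ∈ cylinder c i v := by
  intro b hb
  rcases eq_or_ne b a with rfl | hba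
  · rwa [update_self]
  · rw [update_of_ne hba]
    exact hx b hb

theorem eqOn_update : Set.EqOn (update u i s) u {i}ᶜ :=
  fun _ ha => update_of_ne ha _ _

theorem eq_of_eqOn_compl_singleton (h : Set.EqOn u v {i}ᶜ) (hi : u i = v i) : u = v := by
  funext a
  rcases eq_or_ne a i with rfl | ha
  exacts [hi, h ha]

theorem eqOn_compl_singleton_of_eqOn_compl_pair {j k : Fin d} (h : Set.EqOn u v {j, k}ᶜ)
    (hj : u j = v j) : Set.EqOn u v {k}ᶜ := by
  intro a ha
  rcases eq_or_ne a j with rfl | haj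
  exacts [hj, h (by simp_all)]

theorem eqOn_compl_pair_of_update {j k : Fin d} (h : Set.EqOn (update u j s) v {k}ᶜ) :
    Set.EqOn u v {j, k}ᶜ := by
  intro a ha
  rw [Set.mem_compl_iff, Set.mem_insert_iff, Set.mem_singleton_iff, not_or] at ha
  rw [← h ha.2, update_of_ne ha.1]

theorem mem_realize_update :
    x ∈ realize c (update v i s) ↔ x i ∈ Eltr c s ∧ x ∈ cylinder c i v := by
  rw [mem_realize_iff_mem_cylinder i, update_self, mem_cylinder_congr eqOn_update]

theorem not_dichotomous_of_mem_realize (hu : x ∈ realize c u) (hv : x ∈ realize c v) :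
    ¬ Dichotomous c u v :=
  fun ⟨j, hj⟩ => ESet.ne_apply_of_mem (hu j).1 (hu j).2 (hv j).2 hj

variable [IsComplementation c]

theorem realize_nonempty (v : Fin d → S) : (realize c v).Nonempty := by
  choose x hx using fun a => Eltr_nonempty (c := c) (v a)
  exact ⟨x, hx⟩

theorem exists_mem_cylinder_inter (h : ∀ a ≠ i, v a ≠ c (u a)) :
    ∃ x, x ∈ cylinder c i u ∧ x ∈ cylinder c i v := by
  have (a : Fin d) : ∃ B, a ≠ i → B ∈ Eltr c (u a) ∧ B ∈ Eltr c (v a) := by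
    rcases eq_or_ne a i with rfl | ha
    · exact ⟨∅, fun h => absurd rfl h⟩
    · exact (exists_mem_Eltr₂ (h a ha)).imp fun _ hB _ => hB
  choose x hx using this
  exact ⟨x, fun a ha => (hx a ha).1, fun a ha => (hx a ha).2⟩

end Boxes

section Flip

open IsComplementation

variable {S : Type*} {c : S → S} {d : ℕ} {i j k : Fin d} {s : S} {u v : Fin d → S}

/-- The twin of the word `u` in direction `i`. -/
def flipAt (c : S → S) (i : Fin d) (u : Fin d → S) : Fin d → S :=
  update u i (c (u i))

theorem flipAt_self (i : Fin d) (u : Fin d → S) : flipAt c i u i = c (u i) :=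
  update_self ..

theorem flipAt_of_ne (h : j ≠ i) (u : Fin d → S) : flipAt c i u j = u j :=
  update_of_ne h ..

theorem eqOn_flipAt : Set.EqOn (flipAt c i u) u {i}ᶜ :=
  eqOn_update

theorem eq_flipAt (h : Set.EqOn v u {i}ᶜ) (hi : v i = c (u i)) : v = flipAt c i u :=
  eq_of_eqOn_compl_singleton (h.trans eqOn_flipAt.symm) (hi.trans (flipAt_self i u).symm)

theorem twinPair_flipAt (i : Fin d) (u : Fin d → S) : TwinPair c u (flipAt c i u) :=
  ⟨i, flipAt_self i u, fun _ ha => (flipAt_of_ne ha u).symm⟩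

theorem eq_flipAt_of_update_eq (hkj : k ≠ j) (hj : v j = u j)
    (h : update v j s = flipAt c k (update u j s)) : v = flipAt c k u := by
  funext a
  rcases eq_or_ne a j with rfl | haj
  · rw [flipAt_of_ne hkj.symm, hj]
  · have ha := congrFun h a
    rcases eq_or_ne a k with rfl | hak
    · rwa [update_of_ne haj, flipAt_self, update_of_ne haj, ← flipAt_self (c := c)] at ha
    · rwa [update_of_ne haj, flipAt_of_ne hak, update_of_ne haj,
        ← flipAt_of_ne (c := c) hak u] at ha

variable [IsComplementation c]

theorem flipAt_flipAt (i : Fin d) (u : Fin d → S) : flipAt c i (flipAt c i u) = u := by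
  simp [flipAt, apply_apply c]

theorem flipAt_ne (i : Fin d) (u : Fin d → S) : flipAt c i u ≠ u :=
  fun h => apply_ne (c := c) (u i) (by rw [← flipAt_self (c := c), h])

end Flip

section Codes

open IsComplementation

variable {S : Type*} {c : S → S} {d : ℕ} {i : Fin d} {B : Set S}
  {C V W : Finset (Fin d → S)} {R Z u v : Fin d → S} {x : Fin d → Set S}

/-- A set of words without twin pairs. -/
def TwinFree (c : S → S) (V : Finset (Fin d → S)) : Prop :=
  ∀ u ∈ V, ∀ v ∈ V, ¬ TwinPair c u v

theorem TwinFree.mono (hV : TwinFree c V) (h : C ⊆ V) : TwinFree c C :=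
  fun u hu v hv => hV u (h hu) v (h hv)

theorem TwinFree.flipAt_notMem (hV : TwinFree c V) (hu : u ∈ V) : flipAt c i u ∉ V :=
  fun h => hV u hu _ h (twinPair_flipAt i u)

theorem PolyboxCode.mono {A D : Set (Fin d → S)} (hA : PolyboxCode c A) (h : D ⊆ A) :
    PolyboxCode c D :=
  fun u hu v hv => hA u (h hu) v (h hv)

theorem PolyboxCode.eq_of_mem_realize (hV : PolyboxCode c (V : Set (Fin d → S))) (hu : u ∈ V)
    (hv : v ∈ V) (hxu : x ∈ realize c u) (hxv : x ∈ realize c v) : u = v := by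
  by_contra h
  exact not_dichotomous_of_mem_realize hxu hxv (hV u hu v hv h)

theorem PolyboxCode.eq_of_mem_cylinder (hV : PolyboxCode c (V : Set (Fin d → S))) (hu : u ∈ V)
    (hv : v ∈ V) (hxu : x ∈ cylinder c i u) (hxv : x ∈ cylinder c i v) (hi : v i ≠ c (u i)) :
    u = v := by
  by_contra h
  obtain ⟨j, hj⟩ := hV u hu v hv h
  have hji : j ≠ i := by rintro rfl; exact hi hj
  exact ESet.ne_apply_of_mem (hxu j hji).1 (hxu j hji).2 (hxv j hji).2 hj

/-- The box of `R` is contained in the union of the boxes of the words of `C`. -/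
def Covers (c : S → S) (C : Finset (Fin d → S)) (R : Fin d → S) : Prop :=
  ∀ x ∈ realize c R, ∃ Q ∈ C, x ∈ realize c Q

theorem Covers.exists_mem_cylinder (hR : Covers c C R) (hB : B ∈ Eltr c (R i))
    (hx : x ∈ cylinder c i R) : ∃ Q ∈ C, B ∈ Eltr c (Q i) ∧ x ∈ cylinder c i Q := by
  obtain ⟨Q, hQ, hxQ⟩ := hR _ (update_mem_realize.2 ⟨hB, hx⟩)
  exact ⟨Q, hQ, update_mem_realize.1 hxQ⟩

open scoped Classical in
theorem Covers.filter_not_dichotomous (hR : Covers c C R) :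
    Covers c {Q ∈ C | ¬ Dichotomous c R Q} R := by
  intro x hx
  obtain ⟨Q, hQ, hxQ⟩ := hR x hx
  exact ⟨Q, Finset.mem_filter.2 ⟨hQ, not_dichotomous_of_mem_realize hx hxQ⟩, hxQ⟩

/-- Equivalence of two finite polybox codes, including the requirement that both are codes. -/
structure CodeEquiv (c : S → S) (V W : Finset (Fin d → S)) : Prop where
  code_left : PolyboxCode c (V : Set (Fin d → S))
  code_right : PolyboxCode c (W : Set (Fin d → S))
  covers_left : ∀ w ∈ W, Covers c V w
  covers_right : ∀ v ∈ V, Covers c W v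

theorem CodeEquiv.symm (h : CodeEquiv c V W) : CodeEquiv c W V :=
  ⟨h.code_right, h.code_left, h.covers_right, h.covers_left⟩

variable [IsComplementation c]

theorem PolyboxCode.eq_of_eqOn (hV : PolyboxCode c (V : Set (Fin d → S))) (hu : u ∈ V)
    (hv : v ∈ V) (h : Set.EqOn u v {i}ᶜ) (hi : v i ≠ c (u i)) : u = v := by
  obtain ⟨x, hx⟩ := realize_nonempty (c := c) u
  have hxu : x ∈ cylinder c i u := realize_subset_cylinder hx
  exact hV.eq_of_mem_cylinder hu hv hxu ((mem_cylinder_congr h).1 hxu) hi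

-- Moving along the axis `i` inside the box of `R`, one has to leave the box of `Z`; the word
-- entered there is dichotomous to `Z` in the direction `i` only.
theorem Covers.exists_complementary_letter (hR : Covers c C R)
    (hC : PolyboxCode c (C : Set (Fin d → S))) (hZ : Z ∈ C) (hi : Z i ≠ R i)
    (hxR : x ∈ cylinder c i R) (hxZ : x ∈ cylinder c i Z) :
    ∃ Y ∈ C, Y i = c (Z i) ∧ x ∈ cylinder c i Y := by
  obtain ⟨B, hBR, hBZ⟩ := exists_mem_Eltr₂ (involutive (c := c).injective.ne hi)
  obtain ⟨Y, hY, hBY, hxY⟩ := hR.exists_mem_cylinder hBR hxR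
  refine ⟨Y, hY, ?_, hxY⟩
  by_contra hne
  obtain rfl := hC.eq_of_mem_cylinder hZ hY hxZ hxY hne
  exact ESet.notMem_of_apply_mem hBZ.1 hBZ.2 hBY.2

theorem CodeEquiv.exists_same_or_complementary_letter (h : CodeEquiv c V W) (hv : v ∈ V)
    (hx : x ∈ cylinder c i v) :
    (∃ w ∈ W, w i = v i ∧ x ∈ cylinder c i w) ∨ ∃ u ∈ V, u i = c (v i) ∧ x ∈ cylinder c i u := by
  obtain ⟨B, hB⟩ := Eltr_nonempty (c := c) (v i)
  obtain ⟨w, hw, -, hxw⟩ := (h.covers_right v hv).exists_mem_cylinder hB hx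
  by_cases hwv : w i = v i
  · exact Or.inl ⟨w, hw, hwv, hxw⟩
  · exact Or.inr ((h.covers_left w hw).exists_complementary_letter h.code_left hv
      (Ne.symm hwv) hxw hx)

end Codes

section Cardinality

variable {S : Type*} {c : S → S} {d : ℕ} {V W : Finset (Fin d → S)} {v w : Fin d → S}
  {x : Fin d → Set S}

open scoped Classical in
/-- The point of the box `v̌` all of whose coordinates are those of `x` or their complements. -/
noncomputable def corner (x : Fin d → Set S) (v : Fin d → S) : Fin d → Set S :=
  fun i => if v i ∈ x i then x i else (x i)ᶜ

theorem corner_mem_realize (hx : ∀ i, x i ∈ ESet c) (v : Fin d → S) : corner x v ∈ realize c v := by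
  intro i
  unfold corner
  split_ifs with hi
  exacts [⟨hx i, hi⟩, ⟨ESet.compl_mem (hx i), hi⟩]

theorem corner_eq_of_mem_realize (h : corner x v ∈ realize c w) : corner x v = corner x w := by
  funext i
  have hi : w i ∈ corner x v i := (h i).2
  unfold corner at hi ⊢
  split_ifs at hi ⊢ <;> first | rfl | contradiction

variable [IsComplementation c]

-- Only one of the `2 ^ d` corners `x i`, `(x i)ᶜ` lies in a given box, so that boxes can be
-- counted by their corners.
theorem PolyboxCode.card_le_of_covers (hV : PolyboxCode c (V : Set (Fin d → S)))
    (h : ∀ v ∈ V, Covers c W v) : #V ≤ #W := by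
  obtain rfl | ⟨v₀, -⟩ := V.eq_empty_or_nonempty
  · simp
  obtain ⟨x, hx⟩ := realize_nonempty (c := c) v₀
  have hcorner := corner_mem_realize fun i => (hx i).1
  refine Finset.card_le_card_of_forall_subsingleton (fun v w => corner x v ∈ realize c w)
    (fun v hv => h v hv _ (hcorner v)) fun w _ u ⟨hu, huw⟩ v ⟨hv, hvw⟩ => ?_
  refine hV.eq_of_mem_realize hu hv (hcorner u) ?_
  rw [corner_eq_of_mem_realize huw, ← corner_eq_of_mem_realize hvw]
  exact hcorner v

theorem CodeEquiv.card_eq (h : CodeEquiv c V W) : #V = #W :=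
  (h.code_left.card_le_of_covers h.covers_right).antisymm
    (h.code_right.card_le_of_covers h.covers_left)

end Cardinality

section Slices

variable {S : Type*} {c : S → S} {d : ℕ} {i : Fin d} {s : S} {B : Set S}
  {C V W : Finset (Fin d → S)} {R u v : Fin d → S}

open scoped Classical in
/-- The words of `V` with the letter `s` at position `i`. -/
noncomputable def letterClass (V : Finset (Fin d → S)) (i : Fin d) (s : S) :
    Finset (Fin d → S) :=
  {v ∈ V | v i = s}

open scoped Classical in
/-- The words of `V` whose boxes meet the hyperplane `x i = B`. -/
noncomputable def fiber (V : Finset (Fin d → S)) (i : Fin d) (B : Set S) : Finset (Fin d → S) :=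
  {v ∈ V | v i ∈ B}

open scoped Classical in
/-- The code induced by `V` on the hyperplane `x i = B`. The hyperplane is kept inside the same
space by writing a fixed letter `s` at position `i`. -/
noncomputable def sliceAt (V : Finset (Fin d → S)) (i : Fin d) (B : Set S) (s : S) :
    Finset (Fin d → S) :=
  (fiber V i B).image (update · i s)

theorem mem_letterClass : v ∈ letterClass V i s ↔ v ∈ V ∧ v i = s := by
  simp only [letterClass, Finset.mem_filter]

theorem letterClass_subset : letterClass V i s ⊆ V :=
  fun _ h => (mem_letterClass.1 h).1

theorem mem_fiber : v ∈ fiber V i B ↔ v ∈ V ∧ v i ∈ B := by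
  simp only [fiber, Finset.mem_filter]

theorem fiber_subset : fiber V i B ⊆ V :=
  fun _ h => (mem_fiber.1 h).1

theorem mem_sliceAt : u ∈ sliceAt V i B s ↔ ∃ v ∈ V, v i ∈ B ∧ update v i s = u := by
  simp only [sliceAt, Finset.mem_image, mem_fiber, and_assoc]

theorem card_fiber_add_card_fiber_compl (V : Finset (Fin d → S)) (i : Fin d) (B : Set S) :
    #(fiber V i B) + #(fiber V i Bᶜ) = #V := by
  classical
  convert Finset.card_filter_add_card_filter_not (s := V) (fun v => v i ∈ B) <;>
    simp only [fiber, Set.mem_compl_iff]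

theorem Covers.slice (hR : Covers c C R) (hB : B ∈ Eltr c (R i)) :
    Covers c (sliceAt C i B s) (update R i s) := by
  intro x hx
  rw [mem_realize_update] at hx
  obtain ⟨Q, hQ, hBQ, hxQ⟩ := hR.exists_mem_cylinder hB hx.2
  exact ⟨update Q i s, mem_sliceAt.2 ⟨Q, hQ, hBQ.2, rfl⟩, mem_realize_update.2 ⟨hx.1, hxQ⟩⟩

theorem PolyboxCode.slice (hV : PolyboxCode c (V : Set (Fin d → S))) (hB : B ∈ ESet c) :
    PolyboxCode c (sliceAt V i B s : Set (Fin d → S)) := by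
  intro u' hu' v' hv' hne
  obtain ⟨u, hu, huB, rfl⟩ := mem_sliceAt.1 hu'
  obtain ⟨v, hv, hvB, rfl⟩ := mem_sliceAt.1 hv'
  obtain ⟨j, hj⟩ := hV u hu v hv (by rintro rfl; exact hne rfl)
  have hji : j ≠ i := by rintro rfl; exact ESet.ne_apply_of_mem hB huB hvB hj
  exact ⟨j, by rwa [update_of_ne hji, update_of_ne hji]⟩

theorem CodeEquiv.slice (h : CodeEquiv c V W) (hB : B ∈ ESet c) :
    CodeEquiv c (sliceAt V i B s) (sliceAt W i B s) where
  code_left := h.code_left.slice hB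
  code_right := h.code_right.slice hB
  covers_left w' hw' := by
    obtain ⟨w, hw, hwB, rfl⟩ := mem_sliceAt.1 hw'
    exact (h.covers_left w hw).slice ⟨hB, hwB⟩
  covers_right v' hv' := by
    obtain ⟨v, hv, hvB, rfl⟩ := mem_sliceAt.1 hv'
    exact (h.covers_right v hv).slice ⟨hB, hvB⟩

variable [IsComplementation c]

theorem PolyboxCode.eq_of_update_eq (hV : PolyboxCode c (V : Set (Fin d → S))) (hB : B ∈ ESet c)
    (hu : u ∈ V) (huB : u i ∈ B) (hv : v ∈ V) (hvB : v i ∈ B) (h : update u i s = update v i s) :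
    u = v :=
  hV.eq_of_eqOn hu hv ((eqOn_update.symm.trans fun a _ => congrFun h a).trans eqOn_update)
    (ESet.ne_apply_of_mem hB huB hvB)

theorem PolyboxCode.card_sliceAt (hV : PolyboxCode c (V : Set (Fin d → S))) (hB : B ∈ ESet c) :
    #(sliceAt V i B s) = #(fiber V i B) := by
  classical
  refine Finset.card_image_of_injOn fun u hu v hv h => ?_
  rw [Finset.mem_coe, mem_fiber] at hu hv
  exact hV.eq_of_update_eq hB hu.1 hu.2 hv.1 hv.2 h

theorem CodeEquiv.card_fiber_eq (h : CodeEquiv c V W) (hB : B ∈ ESet c) :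
    #(fiber V i B) = #(fiber W i B) := by
  rcases isEmpty_or_nonempty S with hS | ⟨⟨s⟩⟩
  · have : IsEmpty (Fin d → S) := ⟨fun v => isEmptyElim (v i)⟩
    simp [Finset.eq_empty_of_isEmpty]
  · rw [← h.code_left.card_sliceAt (s := s) hB, ← h.code_right.card_sliceAt (s := s) hB,
      (h.slice hB).card_eq]

theorem PolyboxCode.update_mem_iff (hV : PolyboxCode c (V : Set (Fin d → S)))
    (hB : B ∈ ESet c) (hs : s ∈ B) (hv : v ∈ V) (hvB : v i ∈ B) :
    update v i s ∈ V ↔ v i = s := by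
  refine ⟨fun h => ?_, fun h => by rwa [← h, update_eq_self]⟩
  have := hV.eq_of_update_eq (s := s) hB hv hvB h (by rwa [update_self]) (by simp)
  rw [this, update_self]

end Slices

section CoveredWords

open IsComplementation

variable {S : Type*} {c : S → S} {d : ℕ} {i a : Fin d} {s : S} {B : Set S}
  {C V : Finset (Fin d → S)} {R Q Y v : Fin d → S} {x y : Fin d → Set S}

theorem eq_or_eq_of_card_le_two {α : Type*} {C : Finset α} {p q r : α} (h : #C ≤ 2) (hp : p ∈ C)
    (hq : q ∈ C) (hpq : p ≠ q) (hr : r ∈ C) : r = p ∨ r = q := by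
  by_contra! hne
  exact h.not_gt (Finset.two_lt_card.2 ⟨p, hp, q, hq, r, hr, hpq, hne.1.symm, hne.2.symm⟩)

theorem letterClass_subset_fiber (hs : s ∈ B) : letterClass V i s ⊆ fiber V i B := by
  intro v hv
  obtain ⟨hvV, rfl⟩ := mem_letterClass.1 hv
  exact mem_fiber.2 ⟨hvV, hs⟩

theorem covers_letterClass_flipAt
    (h : ∀ x ∈ cylinder c i v, ∃ u ∈ V, u i = c (v i) ∧ x ∈ cylinder c i u) :
    Covers c (letterClass V i (c (v i))) (flipAt c i v) := by
  intro x hx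
  obtain ⟨hxi, hxv⟩ := mem_realize_update.1 hx
  obtain ⟨u, hu, hui, hxu⟩ := h x hxv
  exact ⟨u, mem_letterClass.2 ⟨hu, hui⟩, (mem_realize_iff_mem_cylinder i).2 ⟨hui ▸ hxi, hxu⟩⟩

variable [IsComplementation c]

theorem Covers.eqOn_of_card_le_two (hR : Covers c C R)
    (hC : PolyboxCode c (C : Set (Fin d → S))) (h2 : #C ≤ 2) (hQ : Q ∈ C)
    (hxR : x ∈ realize c R) (hxQ : x ∈ realize c Q) (ha : Q a ≠ R a) : Set.EqOn Q R {a}ᶜ := by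
  intro b hb
  by_contra hne
  obtain ⟨Z, hZ, hZa, hxZ⟩ := hR.exists_complementary_letter hC hQ ha
    (realize_subset_cylinder hxR) (realize_subset_cylinder hxQ)
  obtain ⟨Y, hY, hYb, -⟩ := hR.exists_complementary_letter hC hQ hne
    (realize_subset_cylinder hxR) (realize_subset_cylinder hxQ)
  have hQZ : Q ≠ Z := by rintro rfl; exact apply_ne _ hZa.symm
  obtain rfl | rfl := eq_or_eq_of_card_le_two h2 hQ hZ hQZ hY
  · exact apply_ne _ hYb.symm
  · exact ESet.ne_apply_of_mem (hxQ b).1 (hxQ b).2 (hxZ b hb).2 hYb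

theorem Covers.exists_flipAt_mem_of_card_le_two (hR : Covers c C R)
    (hC : PolyboxCode c (C : Set (Fin d → S))) (h2 : #C ≤ 2) (hRC : R ∉ C) :
    ∃ a, ∃ Q ∈ C, flipAt c a Q ∈ C ∧ Set.EqOn Q R {a}ᶜ ∧ Q a ≠ R a ∧ Q a ≠ c (R a) := by
  obtain ⟨x, hxR⟩ := realize_nonempty (c := c) R
  obtain ⟨Q, hQ, hxQ⟩ := hR x hxR
  obtain ⟨a, ha⟩ := ne_iff.1 (ne_of_mem_of_not_mem hQ hRC)
  have hQR : Q a ≠ c (R a) := ESet.ne_apply_of_mem (hxR a).1 (hxR a).2 (hxQ a).2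
  have hQoff := hR.eqOn_of_card_le_two hC h2 hQ hxR hxQ ha
  obtain ⟨Z, hZ, hZa, hxZ⟩ := hR.exists_complementary_letter hC hQ ha
    (realize_subset_cylinder hxR) (realize_subset_cylinder hxQ)
  obtain ⟨B, hBR, hBZ⟩ : ∃ B, B ∈ Eltr c (R a) ∧ B ∈ Eltr c (Z a) :=
    exists_mem_Eltr₂ (hZa ▸ involutive.injective.ne ha)
  have hZoff := hR.eqOn_of_card_le_two hC h2 hZ
    (update_mem_realize.2 ⟨hBR, realize_subset_cylinder hxR⟩) (update_mem_realize.2 ⟨hBZ, hxZ⟩)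
    (by rw [hZa]; exact (ne_apply_comm.1 hQR).symm)
  obtain rfl := eq_flipAt (hZoff.trans hQoff.symm) hZa
  exact ⟨a, Q, hQ, hZ, hQoff, ha, hQR⟩

theorem exists_mem_cylinder_inter_eq (hRQ : ¬ Dichotomous c R Q) (hy : y ∈ cylinder c i Q) :
    ∃ x, x ∈ cylinder c i R ∧ x ∈ cylinder c i Q ∧ ∀ a, Q a = R a → x a = y a := by
  obtain ⟨z, hzR, hzQ⟩ := exists_mem_cylinder_inter (i := i) fun a _ h => hRQ ⟨a, h⟩
  classical
  refine ⟨fun a => if Q a = R a then y a else z a, fun a ha => ?_, fun a ha => ?_,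
    fun a ha => if_pos ha⟩
  all_goals dsimp only; split_ifs with h
  exacts [h ▸ hy a ha, hzR a ha, hy a ha, hzQ a ha]

theorem Covers.apply_eq_of_unique_letter (hR : Covers c C R)
    (hC : PolyboxCode c (C : Set (Fin d → S))) (hQi : Q i ≠ c (R i))
    (huniq : ∀ Z ∈ C, Z i = Q i → Z = Q) (hY : Y ∈ C) (hYi : Y i = c (Q i))
    (hxR : x ∈ cylinder c i R) (hxY : x ∈ cylinder c i Y) (ha : a ≠ i) (hQa : Q a ≠ R a) :
    Y a = Q a := by
  by_contra hne
  obtain ⟨B, hBR, hBY, hBQ⟩ : ∃ B, B ∈ Eltr c (R a) ∧ B ∈ Eltr c (Y a) ∧ B ∈ Eltr c (c (Q a)) :=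
    exists_mem_Eltr₃ (ESet.ne_apply_of_mem (hxR a ha).1 (hxR a ha).2 (hxY a ha).2)
      (involutive.injective.ne hQa) (involutive.injective.ne (Ne.symm hne))
  obtain ⟨Z, hZ, hZi, hxZ⟩ := hR.exists_complementary_letter hC hY
    (by rw [hYi]; exact (ne_apply_comm.1 hQi).symm)
    (update_mem_cylinder hxR hBR) (update_mem_cylinder hxY hBY)
  obtain rfl := huniq Z hZ (by rw [hZi, hYi, apply_apply c])
  have hZB := hxZ a ha
  rw [update_self] at hZB
  exact ESet.apply_notMem hZB.1 hZB.2 hBQ.2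

theorem Covers.letterClass_of_unique_letter (hR : Covers c C R)
    (hC : PolyboxCode c (C : Set (Fin d → S))) (hQ : Q ∈ C) (hRQ : ¬ Dichotomous c R Q)
    (hi : Q i ≠ R i) (huniq : ∀ Z ∈ C, Z i = Q i → Z = Q) :
    Covers c (letterClass C i (c (Q i))) (flipAt c i Q) := by
  refine covers_letterClass_flipAt fun y hy => ?_
  obtain ⟨x, hxR, hxQ, hxy⟩ := exists_mem_cylinder_inter_eq hRQ hy
  obtain ⟨Y, hY, hYi, hxY⟩ := hR.exists_complementary_letter hC hQ hi hxR hxQ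
  refine ⟨Y, hY, hYi, fun a ha => ?_⟩
  by_cases hQa : Q a = R a
  · exact hxy a hQa ▸ hxY a ha
  · rw [hR.apply_eq_of_unique_letter hC (fun h => hRQ ⟨i, h⟩) huniq hY hYi hxR hxY ha hQa]
    exact hy a ha

theorem letterClass_ssubset (hv : v ∈ V) : letterClass V i (c (v i)) ⊂ V :=
  letterClass_subset.ssubset_of_mem_notMem hv fun h => apply_ne _ (mem_letterClass.1 h).2.symm

theorem TwinFree.flipAt_notMem_sliceAt (hT : TwinFree c C)
    (hletter : ∀ u ∈ C, ∀ v ∈ C, u i ∈ B → v i ∈ B → u i = v i) (hQ : Q ∈ sliceAt C i B s) :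
    flipAt c a Q ∉ sliceAt C i B s := by
  intro hQ'
  obtain ⟨u, hu, huB, rfl⟩ := mem_sliceAt.1 hQ
  obtain ⟨v, hv, hvB, hvu⟩ := mem_sliceAt.1 hQ'
  have hai : a ≠ i := by
    rintro rfl
    have := congrFun hvu a
    rw [flipAt_self, update_self, update_self] at this
    exact apply_ne _ this.symm
  exact hT.flipAt_notMem hu (eq_flipAt_of_update_eq hai (hletter v hv u hu hvB huB) hvu ▸ hv)

theorem TwinFree.not_covers_of_card_le_four (hT : TwinFree c C)
    (hC : PolyboxCode c (C : Set (Fin d → S))) (hRC : ∀ Q ∈ C, ¬ Dichotomous c R Q) (hQ : Q ∈ C)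
    (h4 : #C ≤ 4) (hQ2 : 2 ≤ #(letterClass C i (Q i)))
    (hcQ2 : 2 ≤ #(letterClass C i (c (Q i)))) : ¬ Covers c C R := by
  intro hR
  obtain ⟨B, hBR, hBQ⟩ := exists_mem_Eltr₂ fun h : Q i = c (R i) => hRC Q hQ ⟨i, h⟩
  have hfiber : #(fiber C i B) ≤ 2 := by
    have := card_fiber_add_card_fiber_compl C i B
    have := Finset.card_le_card (letterClass_subset_fiber (V := C) (i := i) (B := Bᶜ)
      (ESet.apply_notMem hBQ.1 hBQ.2))
    omega
  have hclass : letterClass C i (Q i) = fiber C i B :=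
    Finset.eq_of_subset_of_card_le (letterClass_subset_fiber hBQ.2) (hfiber.trans hQ2)
  have hletter (u : Fin d → S) (hu : u ∈ C) (huB : u i ∈ B) : u i = Q i :=
    (mem_letterClass.1 (hclass ▸ mem_fiber.2 ⟨hu, huB⟩)).2
  have hslice : Covers c (sliceAt C i B (R i)) R := by
    simpa only [update_eq_self] using hR.slice (s := R i) hBR
  by_cases hRD : R ∈ sliceAt C i B (R i)
  · obtain ⟨Y, hY, hYB, hYR⟩ := mem_sliceAt.1 hRD
    obtain ⟨Z, hZ, hZY⟩ := Finset.exists_mem_ne hQ2 Y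
    rw [mem_letterClass] at hZ
    obtain ⟨j, hj⟩ := hC Y hY Z hZ.1 hZY.symm
    have hji : j ≠ i := by
      rintro rfl
      exact ESet.ne_apply_of_mem hBR.1 hYB (hZ.2 ▸ hBQ.2) hj
    exact hRC Z hZ.1 ⟨j, by rw [hj, ← hYR, update_of_ne hji]⟩
  · obtain ⟨a, P, hP, hP', -⟩ := hslice.exists_flipAt_mem_of_card_le_two (hC.slice hBR.1)
      (hC.card_sliceAt hBR.1 ▸ hfiber) hRD
    exact hT.flipAt_notMem_sliceAt
      (fun u hu v hv huB hvB => (hletter u hu huB).trans (hletter v hv hvB).symm) hP hP'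

theorem TwinFree.five_le_card_of_covers (hT : TwinFree c C)
    (hC : PolyboxCode c (C : Set (Fin d → S))) (hR : Covers c C R) (hRC : R ∉ C) : 5 ≤ #C := by
  classical
  induction C using Finset.strongInduction generalizing R with
  | H C ih =>
  have five_le_of_ssubset {D : Finset (Fin d → S)} (hDC : D ⊂ C) {P : Fin d → S}
      (hP : Covers c D P) (hPD : P ∉ D) : 5 ≤ #C :=
    (ih D hDC (hT.mono hDC.1) (hC.mono (Finset.coe_subset.2 hDC.1)) hP hPD).trans
      (Finset.card_le_card hDC.1)
  by_cases hall : ∃ Q ∈ C, Dichotomous c R Q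
  · obtain ⟨Q, hQ, hRQ⟩ := hall
    exact five_le_of_ssubset (Finset.filter_ssubset.2 ⟨Q, hQ, not_not.2 hRQ⟩)
      hR.filter_not_dichotomous fun h => hRC (Finset.mem_filter.1 h).1
  push Not at hall
  obtain ⟨x, hxR⟩ := realize_nonempty (c := c) R
  obtain ⟨Q, hQ, hxQ⟩ := hR x hxR
  obtain ⟨i, hi⟩ := ne_iff.1 (ne_of_mem_of_not_mem hQ hRC)
  obtain ⟨Z, hZ, hZi, -⟩ := hR.exists_complementary_letter hC hQ hi
    (realize_subset_cylinder hxR) (realize_subset_cylinder hxQ)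
  have hZRi : Z i ≠ R i := by
    rw [hZi]
    exact (ne_apply_comm.1 fun h => hall Q hQ ⟨i, h⟩).symm
  by_contra! hlt
  have two_le_class {P : Fin d → S} (hP : P ∈ C) (hPi : P i ≠ R i) :
      2 ≤ #(letterClass C i (P i)) := by
    by_contra! hone
    have huniq (Y : Fin d → S) (hY : Y ∈ C) (hYi : Y i = P i) : Y = P :=
      Finset.card_le_one.1 (Nat.le_of_lt_succ hone) Y (mem_letterClass.2 ⟨hY, hYi⟩) P
        (mem_letterClass.2 ⟨hP, rfl⟩)
    exact hlt.not_ge <| five_le_of_ssubset (letterClass_ssubset hP)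
      (hR.letterClass_of_unique_letter hC hP (hall P hP) hPi huniq)
      fun h => hT.flipAt_notMem hP (letterClass_subset h)
  exact hT.not_covers_of_card_le_four hC hall hQ (Nat.le_of_lt_succ hlt) (two_le_class hQ hi)
    (hZi ▸ two_le_class hZ hZRi) hR

theorem TwinFree.five_le_card_letterClass (hT : TwinFree c V)
    (hV : PolyboxCode c (V : Set (Fin d → S))) (hv : v ∈ V)
    (h : ∀ x ∈ cylinder c i v, ∃ u ∈ V, u i = c (v i) ∧ x ∈ cylinder c i u) :
    5 ≤ #(letterClass V i (c (v i))) :=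
  (hT.mono letterClass_subset).five_le_card_of_covers
    (hV.mono (Finset.coe_subset.2 letterClass_subset)) (covers_letterClass_flipAt h) fun h =>
      hT.flipAt_notMem hv (letterClass_subset h)

theorem Covers.not_dichotomous_of_card_le_five (hR : Covers c C R) (hT : TwinFree c C)
    (hC : PolyboxCode c (C : Set (Fin d → S))) (hRC : R ∉ C) (h5 : #C ≤ 5) (hQ : Q ∈ C) :
    ¬ Dichotomous c R Q := by
  classical
  intro hRQ
  have hssub : {Q ∈ C | ¬ Dichotomous c R Q} ⊂ C :=
    Finset.filter_ssubset.2 ⟨Q, hQ, not_not.2 hRQ⟩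
  have := Finset.card_lt_card hssub
  have := (hT.mono hssub.1).five_le_card_of_covers (hC.mono (Finset.coe_subset.2 hssub.1))
    hR.filter_not_dichotomous fun h => hRC (Finset.mem_filter.1 h).1
  omega

end CoveredWords

section NearPairs

open IsComplementation

variable {S : Type*} {c : S → S} {d : ℕ} {i : Fin d} {B : Set S}
  {V W : Finset (Fin d → S)} {v w : Fin d → S} [IsComplementation c]

theorem CodeEquiv.subset_of_card_le_five (h : CodeEquiv c V W) (hT : TwinFree c W)
    (h5 : #W ≤ 5) : V ⊆ W := by
  intro R hRV
  by_contra hRW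
  have not_dichotomous {P Q : Fin d → S} (hP : P ∈ V) (hPW : P ∉ W) (hQ : Q ∈ W) :
      ¬ Dichotomous c P Q :=
    (h.covers_right P hP).not_dichotomous_of_card_le_five hT h.code_right hPW h5 hQ
  have notMem {P : Fin d → S} (hP : P ∈ V) : P ∉ W := by
    intro hPW
    obtain rfl | hRP := eq_or_ne R P
    · exact hRW hPW
    · exact not_dichotomous hRV hRW hPW (h.code_left R hRV P hP hRP)
  obtain ⟨x, hxR⟩ := realize_nonempty (c := c) R
  obtain ⟨w, hw, hxw⟩ := h.covers_right R hRV x hxR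
  obtain ⟨j, hj⟩ := ne_iff.1 (ne_of_mem_of_not_mem hw hRW)
  obtain ⟨u, hu, huj, -⟩ := (h.covers_right R hRV).exists_complementary_letter h.code_right hw hj
    (realize_subset_cylinder hxR) (realize_subset_cylinder hxw)
  have hclass : 5 ≤ #(letterClass W j (c (w j))) := by
    refine hT.five_le_card_letterClass h.code_right hw fun y hy => ?_
    refine (h.symm.exists_same_or_complementary_letter hw hy).resolve_left ?_
    rintro ⟨v, hv, hvj, -⟩
    exact not_dichotomous hv (notMem hv) hu ⟨j, by rw [huj, hvj]⟩
  exact (hclass.trans_lt (Finset.card_lt_card (letterClass_ssubset hw))).not_ge h5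

theorem CodeEquiv.five_le_card_letterClass_of_near (h : CodeEquiv c V W) (hT : TwinFree c W)
    (hv : v ∈ V) (hw : w ∈ W) (hoff : Set.EqOn v w {i}ᶜ) (hne : w i ≠ v i)
    (hne' : w i ≠ c (v i)) : 5 ≤ #(letterClass W i (c (w i))) := by
  refine hT.five_le_card_letterClass h.code_right hw fun x hx => ?_
  refine (h.symm.exists_same_or_complementary_letter hw hx).resolve_left ?_
  rintro ⟨u, hu, hui, hxu⟩
  obtain rfl := h.code_left.eq_of_mem_cylinder hv hu ((mem_cylinder_congr hoff).2 hx) hxu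
    (hui ▸ hne')
  exact hne hui.symm

theorem CodeEquiv.six_le_card_fiber_of_near (h : CodeEquiv c V W) (hT : TwinFree c W) (hv : v ∈ V)
    (hw : w ∈ W) (hoff : Set.EqOn v w {i}ᶜ) (hne : w i ≠ v i) (hne' : w i ≠ c (v i))
    (hB : B ∈ ESet c) (hvB : v i ∈ B) (hwB : c (w i) ∈ B) : 6 ≤ #(fiber W i B) := by
  by_contra! hlt
  have hclass : letterClass W i (c (w i)) = fiber W i B :=
    Finset.eq_of_subset_of_card_le (letterClass_subset_fiber hwB)
      ((Nat.le_of_lt_succ hlt).trans (h.five_le_card_letterClass_of_near hT hv hw hoff hne hne'))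
  have hslice : sliceAt W i B (c (w i)) ⊆ W := by
    intro u' hu'
    obtain ⟨u, hu, huB, rfl⟩ := mem_sliceAt.1 hu'
    have hui : u i = c (w i) := (mem_letterClass.1 (hclass ▸ mem_fiber.2 ⟨hu, huB⟩)).2
    rwa [← hui, update_eq_self]
  have hv' : update v i (c (w i)) ∈ W :=
    hslice <| (h.slice hB).subset_of_card_le_five (hT.mono hslice)
      ((h.code_right.card_sliceAt hB).trans_le (Nat.le_of_lt_succ hlt))
      (mem_sliceAt.2 ⟨v, hv, hvB, rfl⟩)
  exact hT.flipAt_notMem hw (eq_flipAt (eqOn_update.trans hoff) (update_self ..) ▸ hv')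

theorem CodeEquiv.twelve_le_card_of_near (h : CodeEquiv c V W) (hTV : TwinFree c V)
    (hTW : TwinFree c W) (hv : v ∈ V) (hw : w ∈ W) (hoff : Set.EqOn v w {i}ᶜ) (hne : w i ≠ v i)
    (hne' : w i ≠ c (v i)) : 12 ≤ #V := by
  obtain ⟨B, hBv, hBw⟩ : ∃ B, B ∈ Eltr c (v i) ∧ B ∈ Eltr c (c (w i)) :=
    exists_mem_Eltr₂ (involutive.injective.ne hne)
  have hfiber := h.six_le_card_fiber_of_near hTW hv hw hoff hne hne' hBv.1 hBv.2 hBw.2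
  have hfiber' := h.symm.six_le_card_fiber_of_near hTV hw hv hoff.symm hne.symm
    (ne_apply_comm.1 hne') (ESet.compl_mem hBv.1) (ESet.notMem_of_apply_mem hBv.1 hBw.2)
    (ESet.apply_notMem hBv.1 hBv.2)
  rw [← h.card_fiber_eq hBv.1] at hfiber
  rw [← card_fiber_add_card_fiber_compl V i B]
  exact add_le_add hfiber hfiber'

end NearPairs

section LetterCounts

open IsComplementation

variable {S : Type*} {c : S → S} {d : ℕ} {i : Fin d} {l s : S} {A B : Set S}
  {V W : Finset (Fin d → S)}

theorem card_fiber_insert (hl : l ∉ A) :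
    #(fiber V i (insert l A)) = #(letterClass V i l) + #(fiber V i A) := by
  classical
  have hdisj : Disjoint (letterClass V i l) (fiber V i A) :=
    Finset.disjoint_left.2 fun v hv hvA =>
      hl ((mem_letterClass.1 hv).2 ▸ (mem_fiber.1 hvA).2)
  rw [← Finset.card_union_of_disjoint hdisj]
  congr 1
  ext v
  simp only [mem_fiber, mem_letterClass, Finset.mem_union, Set.mem_insert_iff, and_or_left]

theorem sum_card_letterClass_le (V : Finset (Fin d → S)) (i : Fin d) (L : Finset S) :
    ∑ l ∈ L, #(letterClass V i l) ≤ #V := by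
  classical
  have := Finset.sum_card_fiberwise_eq_card_filter V L fun v => v i
  unfold letterClass
  convert this.trans_le (Finset.card_filter_le ..)

variable [IsComplementation c]

theorem ESet.insert_apply_diff_mem (hB : B ∈ ESet c) (l : S) (hl : l ∈ B) :
    insert (c l) (B \ {l}) ∈ ESet c := by
  intro s
  have hs := hB s
  have hcl := ESet.apply_notMem hB hl
  have hne := apply_ne (c := c) l
  have hcs : c s = c l ↔ s = l := involutive.injective.eq_iff
  have hcs' : c s = l ↔ s = c l := involutive.eq_iff
  simp only [Set.mem_insert_iff, Set.mem_sdiff, Set.mem_singleton_iff, hcs, hcs']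
  grind

theorem CodeEquiv.card_letterClass_add (h : CodeEquiv c V W) (i : Fin d) (l : S) :
    #(letterClass V i l) + #(letterClass W i (c l)) =
      #(letterClass W i l) + #(letterClass V i (c l)) := by
  obtain ⟨B, hB, hlB⟩ := Eltr_nonempty (c := c) l
  have hl : l ∉ B \ {l} := fun h => h.2 rfl
  have hcl : c l ∉ B \ {l} := fun h => ESet.apply_notMem hB hlB h.1
  have hBl : insert l (B \ {l}) = B := by
    rw [Set.insert_sdiff_singleton, Set.insert_eq_of_mem hlB]
  have hcard := h.card_fiber_eq (i := i) hB
  have hcard' := h.card_fiber_eq (i := i) (ESet.insert_apply_diff_mem hB l hlB)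
  rw [← hBl, card_fiber_insert hl, card_fiber_insert hl] at hcard
  rw [card_fiber_insert hcl, card_fiber_insert hcl] at hcard'
  omega

end LetterCounts

section Separated

open IsComplementation

variable {S : Type*} {c : S → S} {d : ℕ} {i j : Fin d} {l : S} {B : Set S} {L L' : Set S}
  {C V W : Finset (Fin d → S)} {R Z w : Fin d → S}

/-- There is no near pair between `V` and `W`: words `v ∈ V` and `w ∈ W` which differ in at most one
position form a twin pair. -/
def NoNearPair (c : S → S) (V W : Finset (Fin d → S)) : Prop :=
  ∀ v ∈ V, ∀ w ∈ W, ∀ a, Set.EqOn v w {a}ᶜ → w a = c (v a)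

/-- Equivalence of two twin-free codes without near pairs. -/
structure SeparatedEquiv (c : S → S) (V W : Finset (Fin d → S)) : Prop extends
    CodeEquiv c V W where
  twinFree_left : TwinFree c V
  twinFree_right : TwinFree c W
  noNearPair : NoNearPair c V W

/-- The letters occurring at position `i` in one of two codes. -/
def lettersAt (V W : Finset (Fin d → S)) (i : Fin d) : Set S :=
  {s | ∃ u, (u ∈ V ∨ u ∈ W) ∧ u i = s}

/-- The letters of `L` come from at most two complementary pairs. -/
def AtMostTwoPairs (c : S → S) (L : Set S) : Prop :=
  ∀ r ∈ L, ∀ p ∈ L, ∀ q ∈ L, p ≠ r → p ≠ c r → q = r ∨ q = c r ∨ q = p ∨ q = c p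

theorem lettersAt_comm : lettersAt V W i = lettersAt W V i := by
  simp only [lettersAt, or_comm]

theorem AtMostTwoPairs.mono (hL : AtMostTwoPairs c L) (h : L' ⊆ L) : AtMostTwoPairs c L' :=
  fun r hr p hp q hq => hL r (h hr) p (h hp) q (h hq)

theorem SeparatedEquiv.notMem_sliceAt (h : SeparatedEquiv c V W) (hR : R ∈ V)
    (hCW : C ⊆ W) (hBR : B ∈ Eltr c (R j)) : R ∉ sliceAt C j B (R j) := by
  intro hmem
  obtain ⟨w, hw, hwB, hwR⟩ := mem_sliceAt.1 hmem
  have hoff : Set.EqOn R w {j}ᶜ := hwR ▸ eqOn_update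
  exact ESet.ne_apply_of_mem hBR.1 hBR.2 hwB (h.noNearPair R hR w (hCW hw) j hoff)

theorem SeparatedEquiv.apply_ne_of_update_eqOn (h : SeparatedEquiv c V W) {a : Fin d} (hR : R ∈ V)
    (hw : w ∈ W) (hoff : Set.EqOn (update w j (R j)) R {a}ᶜ)
    (ha : update w j (R j) a ≠ c (R a)) : w j ≠ R j := by
  intro hwj
  rw [← hwj, update_eq_self] at hoff ha
  exact ha (h.noNearPair R hR w hw a hoff.symm)

variable [IsComplementation c]

theorem NoNearPair.symm (h : NoNearPair c V W) : NoNearPair c W V :=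
  fun w hw v hv a hoff => by rw [h v hv w hw a hoff.symm, apply_apply c]

theorem SeparatedEquiv.symm (h : SeparatedEquiv c V W) : SeparatedEquiv c W V where
  toCodeEquiv := h.toCodeEquiv.symm
  twinFree_left := h.twinFree_right
  twinFree_right := h.twinFree_left
  noNearPair := h.noNearPair.symm

theorem SeparatedEquiv.notMem (h : SeparatedEquiv c V W) (i : Fin d) (hR : R ∈ V) : R ∉ W :=
  fun hRW => apply_ne _ (h.noNearPair R hR R hRW i (Set.eqOn_refl _ _)).symm

open scoped Classical in
theorem CodeEquiv.covers_letterClass_union (h : CodeEquiv c V W) (hR : R ∈ V) (i : Fin d) :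
    Covers c (letterClass W i (R i) ∪ (letterClass V i (c (R i))).image (flipAt c i)) R := by
  intro x hx
  have hxi := hx i
  obtain ⟨w, hw, hwi, hxw⟩ | ⟨u, hu, hui, hxu⟩ :=
    h.exists_same_or_complementary_letter hR (realize_subset_cylinder (i := i) hx)
  · exact ⟨w, Finset.mem_union_left _ (mem_letterClass.2 ⟨hw, hwi⟩),
      (mem_realize_iff_mem_cylinder i).2 ⟨hwi ▸ hxi, hxw⟩⟩
  · refine ⟨flipAt c i u, Finset.mem_union_right _
      (Finset.mem_image_of_mem _ (mem_letterClass.2 ⟨hu, hui⟩)), mem_realize_update.2 ⟨?_, hxu⟩⟩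
    rwa [hui, apply_apply c]

theorem CodeEquiv.covers_sliceAt_letterClass (h : CodeEquiv c V W) (hR : R ∈ V)
    (hZ : letterClass V i (c (R i)) = {Z}) (hji : j ≠ i) (hBR : B ∈ Eltr c (R j))
    (hBZ : B ∈ Eltr c (c (Z j))) : Covers c (sliceAt (letterClass W i (R i)) j B (R j)) R := by
  classical
  intro x hx
  have hcov := (h.covers_letterClass_union hR i).slice (s := R j) hBR
  rw [update_eq_self, hZ, Finset.image_singleton] at hcov
  obtain ⟨Q, hQ, hxQ⟩ := hcov x hx
  obtain ⟨w, hw, hwB, rfl⟩ := mem_sliceAt.1 hQ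
  refine ⟨_, mem_sliceAt.2 ⟨w, (Finset.mem_union.1 hw).resolve_right fun hwZ => ?_, hwB, rfl⟩, hxQ⟩
  rw [Finset.mem_singleton.1 hwZ, flipAt_of_ne hji] at hwB
  exact ESet.notMem_of_apply_mem hBZ.1 hBZ.2 hwB

theorem SeparatedEquiv.exists_flipAt_mem_sliceAt (h : SeparatedEquiv c V W) (hR : R ∈ V)
    (hZ : letterClass V i (c (R i)) = {Z}) (h2 : #(letterClass W i (R i)) ≤ 2) (hji : j ≠ i)
    (hBR : B ∈ Eltr c (R j)) (hBZ : B ∈ Eltr c (c (Z j))) :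
    ∃ a, ∃ Q ∈ sliceAt (letterClass W i (R i)) j B (R j),
      flipAt c a Q ∈ sliceAt (letterClass W i (R i)) j B (R j) ∧
        Set.EqOn Q R {a}ᶜ ∧ Q a ≠ R a ∧ Q a ≠ c (R a) := by
  have hcode := h.code_right.mono (Finset.coe_subset.2 (letterClass_subset (i := i) (s := R i)))
  refine (h.covers_sliceAt_letterClass hR hZ hji hBR hBZ).exists_flipAt_mem_of_card_le_two
    (hcode.slice hBR.1) ?_ (h.notMem_sliceAt hR letterClass_subset hBR)
  rw [hcode.card_sliceAt hBR.1]
  exact (Finset.card_le_card fiber_subset).trans h2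

theorem SeparatedEquiv.apply_mem_of_mem_letterClass (h : SeparatedEquiv c V W) (hR : R ∈ V)
    (hZ : letterClass V i (c (R i)) = {Z}) (h2 : #(letterClass W i (R i)) ≤ 2) (hji : j ≠ i)
    (hBR : B ∈ Eltr c (R j)) (hBZ : B ∈ Eltr c (c (Z j))) (hw : w ∈ letterClass W i (R i)) :
    w j ∈ B := by
  obtain ⟨a, Q, hQ, hQ', -⟩ := h.exists_flipAt_mem_sliceAt hR hZ h2 hji hBR hBZ
  have htwo : 2 ≤ #(fiber (letterClass W i (R i)) j B) := by
    rw [← (h.code_right.mono (Finset.coe_subset.2 letterClass_subset)).card_sliceAt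
      (s := R j) hBR.1]
    exact Finset.one_lt_card.2 ⟨_, hQ', _, hQ, flipAt_ne a Q⟩
  rw [← Finset.eq_of_subset_of_card_le fiber_subset (h2.trans htwo)] at hw
  exact (mem_fiber.1 hw).2

theorem SeparatedEquiv.apply_eq_or_eq_of_mem_letterClass (h : SeparatedEquiv c V W) (hR : R ∈ V)
    (hZ : letterClass V i (c (R i)) = {Z}) (h2 : #(letterClass W i (R i)) ≤ 2) (hji : j ≠ i)
    (hj : Z j ≠ R j) (hw : w ∈ letterClass W i (R i)) : w j = R j ∨ w j = c (Z j) := by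
  by_contra! hne
  obtain ⟨B, hBR, hBZ, hBw⟩ : ∃ B, B ∈ Eltr c (R j) ∧ B ∈ Eltr c (c (Z j)) ∧ B ∈ Eltr c (c (w j)) :=
    exists_mem_Eltr₃ (involutive.injective.ne hj) (involutive.injective.ne hne.1)
      (involutive.injective.ne hne.2)
  exact ESet.notMem_of_apply_mem hBw.1 hBw.2
    (h.apply_mem_of_mem_letterClass hR hZ h2 hji hBR hBZ hw)

theorem SeparatedEquiv.three_le_card_letterClass (h : SeparatedEquiv c V W) (hR : R ∈ V)
    (hone : #(letterClass V i (c (R i))) = 1) : 3 ≤ #(letterClass W i (R i)) := by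
  by_contra! hlt
  have h2 : #(letterClass W i (R i)) ≤ 2 := Nat.le_of_lt_succ hlt
  obtain ⟨Z, hZ⟩ := Finset.card_eq_one.1 hone
  obtain ⟨hZV, hZi⟩ := mem_letterClass.1 (hZ ▸ Finset.mem_singleton_self Z)
  obtain ⟨j, hji, hj⟩ : ∃ j ≠ i, Z j ≠ R j := by
    by_contra! heq
    exact h.twinFree_left R hR Z hZV ⟨i, hZi, fun a ha => (heq a ha).symm⟩
  obtain ⟨B, hBR, hBZ⟩ : ∃ B, B ∈ Eltr c (R j) ∧ B ∈ Eltr c (c (Z j)) :=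
    exists_mem_Eltr₂ (involutive.injective.ne hj)
  obtain ⟨a, Q, hQ, hQ', hoff, hQa, hQa'⟩ := h.exists_flipAt_mem_sliceAt hR hZ h2 hji hBR hBZ
  obtain ⟨w, hw, -, rfl⟩ := mem_sliceAt.1 hQ
  obtain ⟨w', hw', -, hw'w⟩ := mem_sliceAt.1 hQ'
  have haj : a ≠ j := by rintro rfl; exact hQa (update_self ..)
  have hwj : w j = c (Z j) := (h.apply_eq_or_eq_of_mem_letterClass hR hZ h2 hji hj hw).resolve_left
    (h.apply_ne_of_update_eqOn hR (letterClass_subset hw) hoff hQa')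
  have hw'j : w' j = c (Z j) := by
    refine (h.apply_eq_or_eq_of_mem_letterClass hR hZ h2 hji hj hw').resolve_left
      (h.apply_ne_of_update_eqOn (a := a) hR (letterClass_subset hw') ?_ ?_)
    · rw [hw'w]
      exact eqOn_flipAt.trans hoff
    · rw [hw'w, flipAt_self]
      exact involutive.injective.ne hQa
  exact h.twinFree_right.flipAt_notMem (letterClass_subset hw)
    (eq_flipAt_of_update_eq haj (hw'j.trans hwj.symm) hw'w ▸ letterClass_subset hw')

theorem SeparatedEquiv.five_le_card_left (h : SeparatedEquiv c V W) (hR : R ∈ V)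
    (hempty : #(letterClass W i (R i)) = 0) : 5 ≤ #(letterClass V i (c (R i))) := by
  refine h.twinFree_left.five_le_card_letterClass h.code_left hR fun x hx => ?_
  refine (h.exists_same_or_complementary_letter hR hx).resolve_left ?_
  rintro ⟨w, hw, hwi, -⟩
  exact (Finset.card_pos.2 ⟨w, mem_letterClass.2 ⟨hw, hwi⟩⟩).ne' hempty

theorem SeparatedEquiv.five_le_card_right (h : SeparatedEquiv c V W) (hR : R ∈ V)
    (hempty : #(letterClass V i (c (R i))) = 0) : 5 ≤ #(letterClass W i (R i)) := by
  classical
  have hcov := h.covers_letterClass_union hR i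
  rw [Finset.card_eq_zero.1 hempty, Finset.image_empty, Finset.union_empty] at hcov
  exact (h.twinFree_right.mono letterClass_subset).five_le_card_of_covers
    (h.code_right.mono (Finset.coe_subset.2 letterClass_subset)) hcov fun hRW =>
      h.notMem i hR (letterClass_subset hRW)

theorem SeparatedEquiv.two_le_card_left (h : SeparatedEquiv c V W) (hR : R ∈ V)
    (h3 : #(letterClass V i (c (R i))) + #(letterClass W i (R i)) ≤ 3) :
    2 ≤ #(letterClass V i (c (R i))) ∧ 1 ≤ #(letterClass W i (R i)) := by
  have hleft := h.five_le_card_left (i := i) hR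
  have hright := h.five_le_card_right (i := i) hR
  have hthree := h.three_le_card_letterClass (i := i) hR
  omega

theorem SeparatedEquiv.eight_le_card_of_mem_left (h : SeparatedEquiv c V W) (hR : R ∈ V)
    (i : Fin d) : 8 ≤ #(letterClass V i (R i)) + #(letterClass V i (c (R i))) +
      (#(letterClass W i (R i)) + #(letterClass W i (c (R i)))) := by
  by_contra! hlt
  have hadd := h.card_letterClass_add i (R i)
  have hcard := h.two_le_card_left (i := i) hR (by omega)
  obtain ⟨R', hR'⟩ := Finset.card_pos.1 (by omega : 0 < #(letterClass V i (c (R i))))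
  obtain ⟨w, hw⟩ := Finset.card_pos.1 hcard.2
  rw [mem_letterClass] at hR' hw
  have hcard' := h.two_le_card_left (i := i) hR'.1
  have hcard'' := h.symm.two_le_card_left (i := i) hw.1
  rw [hR'.2, apply_apply c] at hcard'
  rw [hw.2] at hcard''
  omega

theorem SeparatedEquiv.eight_le_card_of_mem_lettersAt (h : SeparatedEquiv c V W)
    (hl : l ∈ lettersAt V W i) : 8 ≤ #(letterClass V i l) + #(letterClass V i (c l)) +
      (#(letterClass W i l) + #(letterClass W i (c l))) := by
  obtain ⟨u, hu | hu, rfl⟩ := hl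
  · exact h.eight_le_card_of_mem_left hu i
  · rw [add_comm]
    exact h.symm.eight_le_card_of_mem_left hu i

theorem SeparatedEquiv.atMostTwoPairs (h : SeparatedEquiv c V W) (hV : #V ≤ 11) (i : Fin d) :
    AtMostTwoPairs c (lettersAt V W i) := by
  classical
  intro r hr p hp q hq hpr hpcr
  by_contra! hne
  obtain ⟨hqr, hqcr, hqp, hqcp⟩ := hne
  have hsum (X : Finset (Fin d → S)) :
      #(letterClass X i r) + #(letterClass X i (c r)) + (#(letterClass X i p) +
        #(letterClass X i (c p))) + (#(letterClass X i q) + #(letterClass X i (c q))) ≤ #X := by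
    have hle := sum_card_letterClass_le X i {r, c r, p, c p, q, c q}
    have hne := apply_ne (c := c)
    have hcc := apply_apply c
    rw [Finset.sum_insert (by grind), Finset.sum_insert (by grind), Finset.sum_insert (by grind),
      Finset.sum_insert (by grind), Finset.sum_insert (by grind), Finset.sum_singleton] at hle
    omega
  have hsumV := hsum V
  have hsumW := hsum W
  have heq := h.card_eq
  have h8r := h.eight_le_card_of_mem_lettersAt hr
  have h8p := h.eight_le_card_of_mem_lettersAt hp
  have h8q := h.eight_le_card_of_mem_lettersAt hq
  omega

end Separated

section Colored

open IsComplementation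

variable {S : Type*} {c : S → S} {d : ℕ} {i j k : Fin d} {B : Set S}
  {V W : Finset (Fin d → S)} {u v w A E : Fin d → S} {P Q : (Fin d → S) → Prop}

/-- Equivalent disjoint codes of at most five words whose words are colored (`P` on `V`, `Q` on
`W`) such that twins receive different colors, and so do words of `V` and `W` that differ in one
position only without being twins. Slices of two separated codes have this structure. -/
structure ColoredEquiv (c : S → S) (V W : Finset (Fin d → S)) (P Q : (Fin d → S) → Prop) : Prop
    extends CodeEquiv c V W where
  nonempty : V.Nonempty
  card_le : #V ≤ 5
  color_flip_left : ∀ u ∈ V, ∀ a, flipAt c a u ∈ V → (P u ↔ ¬ P (flipAt c a u))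
  color_flip_right : ∀ u ∈ W, ∀ a, flipAt c a u ∈ W → (Q u ↔ ¬ Q (flipAt c a u))
  color_near : ∀ v ∈ V, ∀ w ∈ W, ∀ a, Set.EqOn v w {a}ᶜ → w a ≠ c (v a) → (P v ↔ ¬ Q w)
  disjoint : Disjoint V W
  twoPairs : ∀ i, AtMostTwoPairs c (lettersAt V W i)

/-- The words of `V` with the letter `A j` at position `j` are `A` and its twin at position `k`. -/
def IsTwinClass (c : S → S) (V : Finset (Fin d → S)) (j k : Fin d) (A : Fin d → S) : Prop :=
  ∀ v, v ∈ letterClass V j (A j) ↔ v = A ∨ v = flipAt c k A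

/-- Twin classes of `A` in `V` and of `E` in `W` which agree off `{j, k}` and whose letters at `j`
belong to different complementary pairs and to only one of the two codes. -/
structure TwinCross (c : S → S) (V W : Finset (Fin d → S)) (j k : Fin d) (A E : Fin d → S) :
    Prop where
  left : IsTwinClass c V j k A
  right : IsTwinClass c W j k E
  apply_ne : E j ≠ A j
  apply_ne_compl : E j ≠ c (A j)
  notMem_left : ∀ v ∈ V, v j ≠ E j
  notMem_right : ∀ w ∈ W, w j ≠ A j
  eqOn : Set.EqOn A E {j, k}ᶜ

theorem IsTwinClass.mem (h : IsTwinClass c V j k A) : A ∈ V :=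
  letterClass_subset ((h A).2 (.inl rfl))

theorem IsTwinClass.flipAt_mem (h : IsTwinClass c V j k A) : flipAt c k A ∈ V :=
  letterClass_subset ((h _).2 (.inr rfl))

theorem IsTwinClass.eqOn (h : IsTwinClass c V j k A) (hv : v ∈ V) (hvj : v j = A j) :
    Set.EqOn v A {k}ᶜ := by
  rcases (h v).1 (mem_letterClass.2 ⟨hv, hvj⟩) with rfl | rfl
  exacts [Set.eqOn_refl _ _, eqOn_flipAt]

theorem ColoredEquiv.eq_or_eq_of_mem_lettersAt (h : ColoredEquiv c V W P Q) (hv : v ∈ V)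
    (hw : w ∈ W) (hne : w j ≠ v j) (hne' : w j ≠ c (v j)) (hB : B ∈ ESet c) (hvB : c (v j) ∈ B)
    (hwB : w j ∈ B) {l : S} (hl : l ∈ lettersAt V W j) (hlB : l ∈ B) : l = c (v j) ∨ l = w j := by
  rcases h.twoPairs j (v j) ⟨v, .inl hv, rfl⟩ (w j) ⟨w, .inr hw, rfl⟩ l hl hne hne' with
    rfl | hl | hl | rfl
  · exact absurd hlB (ESet.notMem_of_apply_mem hB hvB)
  · exact .inl hl
  · exact .inr hl
  · exact absurd hlB (ESet.apply_notMem hB hwB)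

variable [IsComplementation c]

theorem IsTwinClass.ne (h : IsTwinClass c V j k A) : k ≠ j := by
  rintro rfl
  have hletter := (mem_letterClass.1 ((h _).2 (.inr rfl))).2
  exact IsComplementation.apply_ne _ ((flipAt_self k A).symm.trans hletter)

theorem IsTwinClass.card_eq_two (h : IsTwinClass c V j k A) : #(letterClass V j (A j)) = 2 := by
  classical
  have heq : letterClass V j (A j) = {A, flipAt c k A} := by
    ext v
    rw [h v, Finset.mem_insert, Finset.mem_singleton]
  rw [heq, Finset.card_pair (flipAt_ne k A).symm]

theorem TwinCross.symm (h : TwinCross c V W j k A E) : TwinCross c W V j k E A where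
  left := h.right
  right := h.left
  apply_ne := h.apply_ne.symm
  apply_ne_compl := ne_apply_comm.1 h.apply_ne_compl
  notMem_left := h.notMem_right
  notMem_right := h.notMem_left
  eqOn := h.eqOn.symm

theorem isTwinClass_of_card_fiber_le_two (h2 : #(fiber V j B) ≤ 2) (hA : A ∈ V) (hAB : A j ∈ B)
    (hkj : k ≠ j) (hflip : flipAt c k A ∈ V) : IsTwinClass c V j k A := by
  have hletter : flipAt c k A j = A j := flipAt_of_ne hkj.symm A
  refine fun v => ⟨fun hv => ?_, ?_⟩
  · exact eq_or_eq_of_card_le_two h2 (mem_fiber.2 ⟨hA, hAB⟩)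
      (mem_fiber.2 ⟨hflip, hletter ▸ hAB⟩) (flipAt_ne k A).symm (letterClass_subset_fiber hAB hv)
  · rintro (rfl | rfl)
    exacts [mem_letterClass.2 ⟨hA, rfl⟩, mem_letterClass.2 ⟨hflip, hletter⟩]

theorem IsTwinClass.apply_eq_of_card_fiber_le_two (h : IsTwinClass c V j k A)
    (h2 : #(fiber V j B) ≤ 2) (hAB : A j ∈ B) (hv : v ∈ V) (hvB : v j ∈ B) : v j = A j := by
  have heq : letterClass V j (A j) = fiber V j B :=
    Finset.eq_of_subset_of_card_le (letterClass_subset_fiber hAB) (h.card_eq_two ▸ h2)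
  exact (mem_letterClass.1 (heq ▸ mem_fiber.2 ⟨hv, hvB⟩)).2

theorem ColoredEquiv.symm (h : ColoredEquiv c V W P Q) : ColoredEquiv c W V Q P where
  toCodeEquiv := h.toCodeEquiv.symm
  nonempty := Finset.card_pos.1 (h.card_eq ▸ Finset.card_pos.2 h.nonempty)
  card_le := h.card_eq ▸ h.card_le
  color_flip_left := h.color_flip_right
  color_flip_right := h.color_flip_left
  color_near w hw v hv a hoff hne := by
    have := h.color_near v hv w hw a hoff.symm (ne_apply_comm.1 hne)
    tauto
  disjoint := h.disjoint.symm
  twoPairs i := lettersAt_comm (V := V) ▸ h.twoPairs i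

theorem ColoredEquiv.not_eqOn_of_flipAt_mem (h : ColoredEquiv c V W P Q) (hv : v ∈ V)
    (hflip : flipAt c k v ∈ V) (hw : w ∈ W) : ¬ Set.EqOn v w {k}ᶜ := by
  intro hoff
  have hoff' : Set.EqOn (flipAt c k v) w {k}ᶜ := eqOn_flipAt.trans hoff
  have hne : w k ≠ c (v k) := fun hk =>
    Finset.disjoint_left.1 h.disjoint hflip (eq_flipAt hoff.symm hk ▸ hw)
  have hne' : w k ≠ c (flipAt c k v k) := by
    rw [flipAt_self, apply_apply c]
    exact fun hk => Finset.disjoint_left.1 h.disjoint hv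
      (eq_of_eqOn_compl_singleton hoff hk.symm ▸ hw)
  have hcol := h.color_near v hv w hw k hoff hne
  have hcol' := h.color_near _ hflip w hw k hoff' hne'
  have hflipcol := h.color_flip_left v hv k hflip
  tauto

theorem CodeEquiv.exists_flipAt_mem_of_card_le_two (h : CodeEquiv c V W) (h2 : #V ≤ 2)
    (hw : w ∈ W) (hwV : w ∉ V) : ∃ a, ∃ q ∈ V, flipAt c a q ∈ V ∧ flipAt c a w ∈ W ∧
      Set.EqOn q w {a}ᶜ ∧ q a ≠ w a ∧ q a ≠ c (w a) := by
  obtain ⟨a, q, hq, hq', hoff, hne, hne'⟩ :=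
    (h.covers_left w hw).exists_flipAt_mem_of_card_le_two h.code_left h2 hwV
  have hqW : q ∉ W := fun hqW =>
    hne (congrFun (h.code_right.eq_of_eqOn hqW hw hoff (ne_apply_comm.1 hne')) a)
  have h2W : #W ≤ 2 := h.card_eq ▸ h2
  obtain ⟨b, t, ht, ht', htq, -, -⟩ :=
    (h.covers_right q hq).exists_flipAt_mem_of_card_le_two h.code_right h2W hqW
  refine ⟨a, q, hq, hq', ?_, hoff, hne, hne'⟩
  have hwq : Set.EqOn w q {b}ᶜ ∧ flipAt c b w ∈ W := by
    rcases eq_or_eq_of_card_le_two h2W ht ht' (flipAt_ne b t).symm hw with rfl | rfl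
    · exact ⟨htq, ht'⟩
    · exact ⟨eqOn_flipAt.trans htq, (flipAt_flipAt (c := c) b t).symm ▸ ht⟩
  have hab : a = b := by
    by_contra hab
    exact hne (hwq.1 hab).symm
  exact hab ▸ hwq.2

theorem CodeEquiv.exists_twins_of_card_fiber_le_two (h : CodeEquiv c V W) (hB : B ∈ ESet c)
    (h2 : #(fiber V j B) ≤ 2) (hw : w ∈ W) (hwB : w j ∈ B)
    (hoff : ∀ v ∈ V, v j ∈ B → ¬ Set.EqOn v w {j}ᶜ) :
    ∃ k ≠ j, ∃ q ∈ fiber V j B, ∃ q' ∈ fiber V j B, ∃ t ∈ fiber W j B,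
      Set.EqOn q w {j, k}ᶜ ∧ Set.EqOn q' w {j, k}ᶜ ∧ Set.EqOn t w {j, k}ᶜ ∧
        q k ≠ w k ∧ q k ≠ c (w k) ∧ q' k = c (q k) ∧ t k = c (w k) := by
  have hwV : w ∉ sliceAt V j B (w j) := fun hmem => by
    obtain ⟨v, hv, hvB, hvw⟩ := mem_sliceAt.1 hmem
    exact hoff v hv hvB (hvw ▸ eqOn_update.symm)
  obtain ⟨k, q₀, hq, hq', ht, hqw, hne, hne'⟩ :=
    (h.slice (i := j) (s := w j) hB).exists_flipAt_mem_of_card_le_two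
      (by rwa [h.code_left.card_sliceAt hB])
      (mem_sliceAt.2 ⟨w, hw, hwB, update_eq_self j w⟩) hwV
  obtain ⟨q, hqV, hqB, rfl⟩ := mem_sliceAt.1 hq
  obtain ⟨q', hqV', hqB', hqq'⟩ := mem_sliceAt.1 hq'
  obtain ⟨t, htW, htB, htw⟩ := mem_sliceAt.1 ht
  have hkj : k ≠ j := by rintro rfl; exact hne (update_self ..)
  have hq'k := congrFun hqq' k
  have htk := congrFun htw k
  rw [flipAt_self, update_of_ne hkj] at hq'k htk
  rw [update_of_ne hkj] at hne hne' hq'k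
  exact ⟨k, hkj, q, mem_fiber.2 ⟨hqV, hqB⟩, q', mem_fiber.2 ⟨hqV', hqB'⟩, t,
    mem_fiber.2 ⟨htW, htB⟩, eqOn_compl_pair_of_update hqw,
    eqOn_compl_pair_of_update (hqq' ▸ eqOn_flipAt.trans hqw),
    eqOn_compl_pair_of_update (htw ▸ eqOn_flipAt), hne, hne', hq'k, htk⟩

theorem ColoredEquiv.not_eqOn_of_mem_fiber (h : ColoredEquiv c V W P Q) (hv : v ∈ V) (hw : w ∈ W)
    (hB : B ∈ ESet c) (hvB : c (v j) ∈ B) (hwB : w j ∈ B)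
    (hlink : Set.EqOn v w {j}ᶜ ∨ NoNearPair c V W) (hu : u ∈ V) (huB : u j ∈ B) :
    ¬ Set.EqOn u w {j}ᶜ := by
  intro huw
  rcases hlink with hvw | hsep
  · have huj : u j = c (v j) := by
      by_contra hne
      have hvu := h.code_left.eq_of_eqOn hv hu (hvw.trans huw.symm) hne
      exact ESet.notMem_of_apply_mem hB hvB (hvu ▸ huB)
    have hflip : flipAt c j v ∈ V := eq_flipAt (huw.trans hvw.symm) huj ▸ hu
    exact h.not_eqOn_of_flipAt_mem hv hflip hw hvw
  · exact ESet.ne_apply_of_mem hB huB hwB (hsep u hu w hw j huw)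

theorem CodeEquiv.apply_eq_of_near (h : CodeEquiv c V W) (hv : v ∈ V) (hw : w ∈ W)
    (hvw : Set.EqOn v w {j}ᶜ) (hne : w j ≠ v j) (hne' : w j ≠ c (v j)) (hB : B ∈ ESet c)
    (hvB : c (v j) ∈ B) (hu : u ∈ V) (huB : u j ∈ B) (huw : Set.EqOn u w {j, k}ᶜ)
    (huk : u k ≠ c (w k)) : u j = c (v j) := by
  obtain ⟨x, hxw, hxu⟩ : ∃ x, x ∈ cylinder c j w ∧ x ∈ cylinder c j u := by
    refine exists_mem_cylinder_inter fun a ha => ?_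
    rcases eq_or_ne a k with rfl | hak
    · exact huk
    · rw [huw (by simp [ha, hak])]
      exact (apply_ne _).symm
  obtain ⟨w', hw', hwj, hxw'⟩ | ⟨u', hu', huj, hxu'⟩ :=
    h.exists_same_or_complementary_letter hv ((mem_cylinder_congr hvw).2 hxw)
  · have heq := h.code_right.eq_of_mem_cylinder hw' hw hxw' hxw (hwj ▸ hne')
    exact absurd (heq ▸ hwj) hne
  · have heq := h.code_left.eq_of_mem_cylinder hu' hu hxu' hxu
      (ESet.ne_apply_of_mem hB (huj ▸ hvB) huB)
    exact heq ▸ huj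

theorem ColoredEquiv.apply_eq_of_mem_fiber (h : ColoredEquiv c V W P Q) (hv : v ∈ V) (hw : w ∈ W)
    (hne : w j ≠ v j) (hne' : w j ≠ c (v j)) (hB : B ∈ ESet c) (hvB : c (v j) ∈ B)
    (hwB : w j ∈ B) (hlink : Set.EqOn v w {j}ᶜ ∨ NoNearPair c V W) (hu : u ∈ fiber V j B)
    (huw : Set.EqOn u w {j, k}ᶜ) (huk : u k ≠ c (w k)) : u j = c (v j) := by
  obtain ⟨huV, huB⟩ := mem_fiber.1 hu
  rcases hlink with hvw | hsep
  · exact h.apply_eq_of_near hv hw hvw hne hne' hB hvB huV huB huw huk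
  · refine (h.eq_or_eq_of_mem_lettersAt hv hw hne hne' hB hvB hwB
      ⟨u, .inl huV, rfl⟩ huB).resolve_right fun huj => ?_
    exact ne_apply_comm.1 huk
      (hsep u huV w hw k (eqOn_compl_singleton_of_eqOn_compl_pair huw huj))

theorem ColoredEquiv.exists_twinCross_of_card_fiber_le_two (h : ColoredEquiv c V W P Q)
    (hv : v ∈ V) (hw : w ∈ W) (hne : w j ≠ v j) (hne' : w j ≠ c (v j)) (hB : B ∈ ESet c)
    (hvB : c (v j) ∈ B) (hwB : w j ∈ B) (hlink : Set.EqOn v w {j}ᶜ ∨ NoNearPair c V W)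
    (h2 : #(fiber V j B) ≤ 2) : ∃ k A E, TwinCross c V W j k A E := by
  obtain ⟨k, hkj, q, hq, q', hq', t, ht, hqw, hq'w, htw, hqk, hqk', hq'k, htk⟩ :=
    h.exists_twins_of_card_fiber_le_two hB h2 hw hwB fun _ =>
      h.not_eqOn_of_mem_fiber hv hw hB hvB hwB hlink
  have hqj := h.apply_eq_of_mem_fiber hv hw hne hne' hB hvB hwB hlink hq hqw hqk'
  have hq'j := h.apply_eq_of_mem_fiber hv hw hne hne' hB hvB hwB hlink hq' hq'w
    (hq'k ▸ involutive.injective.ne hqk)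
  rw [mem_fiber] at hq hq' ht
  have hqflip : flipAt c k q ∈ V := eq_flipAt (eqOn_compl_singleton_of_eqOn_compl_pair
    (hq'w.trans hqw.symm) (hq'j.trans hqj.symm)) hq'k ▸ hq'.1
  have htj : t j = w j := by
    refine (h.eq_or_eq_of_mem_lettersAt hv hw hne hne' hB hvB hwB ⟨t, .inr ht.1, rfl⟩
      ht.2).resolve_left fun htj => h.not_eqOn_of_flipAt_mem hq.1 hqflip ht.1 ?_
    exact eqOn_compl_singleton_of_eqOn_compl_pair (hqw.trans htw.symm) (hqj.trans htj.symm)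
  have hwflip : flipAt c k w ∈ W :=
    eq_flipAt (eqOn_compl_singleton_of_eqOn_compl_pair htw htj) htk ▸ ht.1
  have h2W : #(fiber W j B) ≤ 2 := h.card_fiber_eq (i := j) hB ▸ h2
  have hleft := isTwinClass_of_card_fiber_le_two h2 hq.1 hq.2 hkj hqflip
  have hright := isTwinClass_of_card_fiber_le_two h2W hw hwB hkj hwflip
  have hwq : w j ≠ q j := hqj ▸ hne'
  refine ⟨k, q, w, hleft, hright, hwq, ?_, fun u hu huj => ?_, fun u hu huj => ?_, hqw⟩
  · rwa [hqj, apply_apply c]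
  · exact hwq (huj.symm.trans
      (hleft.apply_eq_of_card_fiber_le_two h2 hq.2 hu (huj ▸ hwB)))
  · exact hwq ((hright.apply_eq_of_card_fiber_le_two h2W hwB hu (huj ▸ hq.2)).symm.trans huj)

theorem ColoredEquiv.exists_twinCross_of_apply_ne (h : ColoredEquiv c V W P Q) (hv : v ∈ V)
    (hw : w ∈ W) (hne : w j ≠ v j) (hne' : w j ≠ c (v j))
    (hlink : Set.EqOn v w {j}ᶜ ∨ NoNearPair c V W) : ∃ k A E, TwinCross c V W j k A E := by
  obtain ⟨B, hvB, hwB⟩ : ∃ B, B ∈ Eltr c (c (v j)) ∧ B ∈ Eltr c (w j) :=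
    exists_mem_Eltr₂ (by rwa [apply_apply c])
  have hB := hvB.1
  by_cases h2 : #(fiber V j B) ≤ 2
  · exact h.exists_twinCross_of_card_fiber_le_two hv hw hne hne' hB hvB.2 hwB.2 hlink h2
  · have h2' : #(fiber W j Bᶜ) ≤ 2 := by
      have hadd := card_fiber_add_card_fiber_compl V j B
      have h5 := h.card_le
      rw [← h.card_fiber_eq (ESet.compl_mem hB)]
      omega
    obtain ⟨k, E, A, hcross⟩ := h.symm.exists_twinCross_of_card_fiber_le_two hw hv hne.symm
      (ne_apply_comm.1 hne') (ESet.compl_mem hB) (ESet.apply_notMem hB hwB.2)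
      (ESet.notMem_of_apply_mem hB hvB.2) (hlink.imp Set.EqOn.symm NoNearPair.symm) h2'
    exact ⟨k, A, E, hcross.symm⟩

theorem ColoredEquiv.exists_twinCross (h : ColoredEquiv c V W P Q) :
    ∃ j k A E, TwinCross c V W j k A E := by
  have hdisj := Finset.disjoint_left.1 h.disjoint
  by_cases hsep : NoNearPair c V W
  · obtain ⟨v, hv⟩ := h.nonempty
    obtain ⟨x, hx⟩ := realize_nonempty (c := c) v
    obtain ⟨w, hw, hxw⟩ := h.covers_right v hv x hx
    obtain ⟨j, hj⟩ := Function.ne_iff.1 fun hwv : w = v => hdisj hv (hwv ▸ hw)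
    exact ⟨j, h.exists_twinCross_of_apply_ne hv hw hj
      (ESet.ne_apply_of_mem (hx j).1 (hx j).2 (hxw j).2) (.inr hsep)⟩
  · unfold NoNearPair at hsep
    push Not at hsep
    obtain ⟨v, hv, w, hw, j, hoff, hne'⟩ := hsep
    have hne : w j ≠ v j := fun hj => hdisj hv (eq_of_eqOn_compl_singleton hoff hj.symm ▸ hw)
    exact ⟨j, h.exists_twinCross_of_apply_ne hv hw hne hne' (.inl hoff)⟩

end Colored

section TwinCrosses

open IsComplementation

variable {S : Type*} {c : S → S} {d : ℕ} {a e j k : Fin d}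
  {V W : Finset (Fin d → S)} {u v z A E : Fin d → S} {x : Fin d → Set S}
  {P Q : (Fin d → S) → Prop}

/-- The shape of the left code of a `ColoredEquiv`: two twin classes with complementary letters
at `j`, represented by their words `u₁`, `u₂` of color `P`. -/
structure ColoredSquare (c : S → S) (V : Finset (Fin d → S)) (P : (Fin d → S) → Prop)
    (j k : Fin d) (u₁ u₂ : Fin d → S) : Prop where
  twins₁ : IsTwinClass c V j k u₁
  twins₂ : IsTwinClass c V j k u₂
  color₁ : P u₁
  color₂ : P u₂
  apply_eq : u₂ j = c (u₁ j)
  eqOn : Set.EqOn u₁ u₂ {j, k}ᶜ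
  color_eq : ∀ v ∈ V, P v → v = u₁ ∨ v = u₂

theorem ColoredSquare.apply_ne {u₁ u₂ : Fin d → S} (hS : ColoredSquare c V P j k u₁ u₂)
    (h : ColoredEquiv c V W P Q) : u₁ k ≠ u₂ k := by
  intro hk
  have hoff : Set.EqOn u₁ u₂ {j}ᶜ := eqOn_compl_singleton_of_eqOn_compl_pair
    (Set.pair_comm j k ▸ hS.eqOn) hk
  have hflip : u₂ = flipAt c j u₁ := eq_flipAt hoff.symm hS.apply_eq
  exact (h.color_flip_left u₁ hS.twins₁.mem j (hflip ▸ hS.twins₂.mem)).1 hS.color₁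
    (hflip ▸ hS.color₂)

variable [IsComplementation c]

theorem IsTwinClass.exists_mem_cylinder_or (hA : IsTwinClass c V j k A) (h : CodeEquiv c V W)
    (hu : u ∈ V) (huj : u j = c (A j)) (hx : x ∈ cylinder c j u) :
    (∃ w ∈ letterClass W j (c (A j)), x ∈ cylinder c j w) ∨
      ∀ a ≠ j, a ≠ k → x a ∈ Eltr c (A a) := by
  obtain ⟨w, hw, hwj, hxw⟩ | ⟨v, hv, hvj, hxv⟩ := h.exists_same_or_complementary_letter hu hx
  · exact .inl ⟨w, mem_letterClass.2 ⟨hw, hwj.trans huj⟩, hxw⟩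
  · rw [huj, apply_apply c] at hvj
    exact .inr fun a haj hak => hA.eqOn hv hvj hak ▸ hxv a haj

theorem TwinCross.exists_mem_cylinder (hX : TwinCross c V W j k A E) (h : CodeEquiv c V W)
    (hz : z ∈ W) (hzj : z j = c (A j)) (hx : x ∈ cylinder c j z) :
    ∃ v ∈ V, v j = c (A j) ∧ x ∈ cylinder c j v := by
  obtain ⟨v, hv, hvj, hxv⟩ | ⟨w, hw, hwj, -⟩ := h.symm.exists_same_or_complementary_letter hz hx
  · exact ⟨v, hv, hvj.trans hzj, hxv⟩
  · rw [hzj, apply_apply c] at hwj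
    exact absurd hwj (hX.notMem_right w hw)

theorem TwinCross.exists_apply_eq_compl (hX : TwinCross c V W j k A E)
    (hW : PolyboxCode c (W : Set (Fin d → S))) (hz : z ∈ W) (hzj : z j = c (A j)) :
    ∃ e ≠ j, e ≠ k ∧ z e = c (A e) := by
  have hsep {F : Fin d → S} (hF : F ∈ W) (hFj : F j = E j) : ∃ e ≠ j, z e = c (F e) := by
    obtain ⟨e, he⟩ := hW F hF z hz fun hFz => hX.apply_ne_compl (by rw [← hFj, hFz, hzj])
    refine ⟨e, ?_, he⟩
    rintro rfl
    rw [hzj, hFj] at he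
    exact hX.apply_ne (involutive.injective he).symm
  obtain ⟨e, hej, he⟩ := hsep hX.right.mem rfl
  obtain ⟨e', hej', he'⟩ := hsep hX.right.flipAt_mem (flipAt_of_ne hX.right.ne.symm E)
  rcases eq_or_ne e k with rfl | hek
  · have hek' : e' ≠ e := by
      rintro rfl
      rw [flipAt_self, he] at he'
      exact IsComplementation.apply_ne _ he'.symm
    refine ⟨e', hej', hek', ?_⟩
    rw [he', flipAt_of_ne hek', hX.eqOn (by simp [hej', hek'])]
  · exact ⟨e, hej, hek, by rw [he, hX.eqOn (by simp [hej, hek])]⟩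

theorem IsTwinClass.eqOn_of_mem_cylinder (hA : IsTwinClass c V j k A) (h : CodeEquiv c V W)
    (hej : e ≠ j) (hek : e ≠ k) (hze : z e = c (A e)) (hzj : z j = c (A j))
    (huniq : ∀ w ∈ letterClass W j (c (A j)), w = z) (hu : u ∈ V) (huj : u j = c (A j))
    (hxz : x ∈ cylinder c j z) (hxu : x ∈ cylinder c j u) : Set.EqOn u z {e}ᶜ := by
  intro a hae
  by_contra hne
  have haj : a ≠ j := by
    rintro rfl
    exact hne (huj.trans hzj.symm)
  obtain ⟨B, hBu, hBz⟩ : ∃ B, B ∈ Eltr c (u a) ∧ B ∈ Eltr c (c (z a)) :=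
    exists_mem_Eltr₂ (involutive.injective.ne (Ne.symm hne))
  obtain ⟨w, hw, hxw⟩ | hxA := hA.exists_mem_cylinder_or h hu huj (update_mem_cylinder hxu hBu)
  · have hza := hxw a haj
    rw [huniq w hw, update_self] at hza
    exact ESet.notMem_of_apply_mem hBz.1 hBz.2 hza.2
  · have hAe := hxA e hej hek
    rw [update_of_ne (Ne.symm hae)] at hAe
    exact ESet.ne_apply_of_mem hAe.1 hAe.2 (hxz e hej).2 hze

theorem TwinCross.card_letterClass_compl (hX : TwinCross c V W j k A E) (h : CodeEquiv c V W) :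
    #(letterClass V j (c (A j))) = 2 + #(letterClass W j (c (A j))) := by
  have hempty : letterClass W j (A j) = ∅ :=
    Finset.eq_empty_of_forall_notMem fun w hw =>
      hX.notMem_right w (letterClass_subset hw) (mem_letterClass.1 hw).2
  have hadd := h.card_letterClass_add j (A j)
  rw [hX.left.card_eq_two, hempty, Finset.card_empty, zero_add] at hadd
  exact hadd.symm

theorem TwinCross.card_letterClass_right_le_one (hX : TwinCross c V W j k A E)
    (h : CodeEquiv c V W) (h5 : #V ≤ 5) : #(letterClass W j (c (A j))) ≤ 1 := by
  classical
  have hle := sum_card_letterClass_le V j {A j, c (A j)}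
  rw [Finset.sum_pair (IsComplementation.apply_ne _).symm, hX.left.card_eq_two,
    hX.card_letterClass_compl h] at hle
  omega

theorem TwinCross.letterClass_right_eq_empty (hX : TwinCross c V W j k A E)
    (h : ColoredEquiv c V W P Q) : letterClass W j (c (A j)) = ∅ := by
  by_contra hne
  obtain ⟨z, hz⟩ := Finset.nonempty_iff_ne_empty.2 hne
  have huniq : ∀ w ∈ letterClass W j (c (A j)), w = z := fun w hw =>
    Finset.card_le_one.1 (hX.card_letterClass_right_le_one h.toCodeEquiv h.card_le) w hw z hz
  obtain ⟨hzW, hzj⟩ := mem_letterClass.1 hz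
  obtain ⟨e, hej, hek, hze⟩ := hX.exists_apply_eq_compl h.code_right hzW hzj
  have hcov {x : Fin d → Set S} (hx : x ∈ cylinder c j z) :
      ∃ v ∈ V, x ∈ cylinder c j v ∧ Set.EqOn v z {e}ᶜ := by
    obtain ⟨v, hv, hvj, hxv⟩ := hX.exists_mem_cylinder h.toCodeEquiv hzW hzj hx
    exact ⟨v, hv, hxv,
      hX.left.eqOn_of_mem_cylinder h.toCodeEquiv hej hek hze hzj huniq hv hvj hx hxv⟩
  obtain ⟨x, hx⟩ := realize_nonempty (c := c) z
  obtain ⟨v, hv, -, hvz⟩ := hcov (realize_subset_cylinder hx)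
  have hve : v e ≠ z e := fun hve =>
    Finset.disjoint_left.1 h.disjoint hv (eq_of_eqOn_compl_singleton hvz hve ▸ hzW)
  obtain ⟨B, hBz, hBv⟩ : ∃ B, B ∈ Eltr c (z e) ∧ B ∈ Eltr c (c (v e)) :=
    exists_mem_Eltr₂ (involutive.injective.ne hve)
  obtain ⟨v', hv', hxv', hv'z⟩ := hcov (update_mem_cylinder (realize_subset_cylinder hx) hBz)
  have hv'e : v' e = c (v e) := by
    by_contra hne
    have hxe := hxv' e hej
    rw [← h.code_left.eq_of_eqOn hv hv' (hvz.trans hv'z.symm) hne, update_self] at hxe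
    exact ESet.notMem_of_apply_mem hBv.1 hBv.2 hxe.2
  exact h.not_eqOn_of_flipAt_mem hv (eq_flipAt (hv'z.trans hvz.symm) hv'e ▸ hv') hzW hvz

theorem TwinCross.eqOn_of_apply_eq_compl (hX : TwinCross c V W j k A E)
    (h : ColoredEquiv c V W P Q) (hu : u ∈ V) (huj : u j = c (A j)) : Set.EqOn u A {j, k}ᶜ := by
  intro a ha
  rw [Set.mem_compl_iff, Set.mem_insert_iff, Set.mem_singleton_iff, not_or] at ha
  by_contra hne
  obtain ⟨x, hx⟩ := realize_nonempty (c := c) u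
  obtain ⟨B, hBu, hBA⟩ : ∃ B, B ∈ Eltr c (u a) ∧ B ∈ Eltr c (c (A a)) :=
    exists_mem_Eltr₂ (involutive.injective.ne (Ne.symm hne))
  obtain ⟨w, hw, -⟩ | hxA := hX.left.exists_mem_cylinder_or h.toCodeEquiv hu huj
    (update_mem_cylinder (realize_subset_cylinder hx) hBu)
  · rw [hX.letterClass_right_eq_empty h] at hw
    exact Finset.notMem_empty w hw
  · have hAa := hxA a ha.1 ha.2
    rw [update_self] at hAa
    exact ESet.notMem_of_apply_mem hBA.1 hBA.2 hAa.2

theorem TwinCross.exists_isTwinClass_compl (hX : TwinCross c V W j k A E)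
    (h : ColoredEquiv c V W P Q) : ∃ C, C j = c (A j) ∧ IsTwinClass c V j k C := by
  classical
  have hcard := hX.card_letterClass_compl h.toCodeEquiv
  rw [hX.letterClass_right_eq_empty h, Finset.card_empty, add_zero] at hcard
  obtain ⟨C, C', hCC', hpair⟩ := Finset.card_eq_two.1 hcard
  have hC : C ∈ letterClass V j (c (A j)) := by simp [hpair]
  have hC' : C' ∈ letterClass V j (c (A j)) := by simp [hpair]
  rw [mem_letterClass] at hC hC'
  have hoff : Set.EqOn C' C {k}ᶜ := eqOn_compl_singleton_of_eqOn_compl_pair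
    ((hX.eqOn_of_apply_eq_compl h hC'.1 hC'.2).trans
      (hX.eqOn_of_apply_eq_compl h hC.1 hC.2).symm) (hC'.2.trans hC.2.symm)
  have hflip : C' = flipAt c k C := eq_flipAt hoff <| by
    by_contra hne
    exact hCC' (h.code_left.eq_of_eqOn hC.1 hC'.1 hoff.symm hne)
  refine ⟨C, hC.2, fun v => ?_⟩
  rw [hC.2, hpair, hflip, Finset.mem_insert, Finset.mem_singleton]

theorem IsTwinClass.exists_color (hA : IsTwinClass c V j k A) (h : ColoredEquiv c V W P Q) :
    ∃ u, IsTwinClass c V j k u ∧ u j = A j ∧ P u := by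
  by_cases hPA : P A
  · exact ⟨A, hA, rfl, hPA⟩
  · have hletter : flipAt c k A j = A j := flipAt_of_ne hA.ne.symm A
    refine ⟨flipAt c k A, fun v => ?_, hletter, ?_⟩
    · rw [hletter, flipAt_flipAt, hA v, or_comm]
    · exact not_not.1 fun hP => hPA ((h.color_flip_left A hA.mem k hA.flipAt_mem).2 hP)

theorem TwinCross.apply_eq_or_eq (hX : TwinCross c V W j k A E) (h : ColoredEquiv c V W P Q)
    (hv : v ∈ V) : v j = A j ∨ v j = c (A j) := by
  rcases h.twoPairs j (A j) ⟨A, .inl hX.left.mem, rfl⟩ (E j) ⟨E, .inr hX.right.mem, rfl⟩ (v j)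
    ⟨v, .inl hv, rfl⟩ hX.apply_ne hX.apply_ne_compl with hvj | hvj | hvj | hvj
  · exact .inl hvj
  · exact .inr hvj
  · exact absurd hvj (hX.notMem_left v hv)
  · have hmem := mem_letterClass.2 ⟨hv, hvj⟩
    rw [hX.symm.letterClass_right_eq_empty h.symm] at hmem
    exact absurd hmem (Finset.notMem_empty v)

theorem ColoredEquiv.exists_coloredSquare (h : ColoredEquiv c V W P Q) :
    ∃ j k u₁ u₂, ColoredSquare c V P j k u₁ u₂ := by
  obtain ⟨j, k, A, E, hX⟩ := h.exists_twinCross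
  obtain ⟨C, hCj, hC⟩ := hX.exists_isTwinClass_compl h
  obtain ⟨u₁, hu₁, hu₁A, hP₁⟩ := hX.left.exists_color h
  obtain ⟨u₂, hu₂, hu₂C, hP₂⟩ := hC.exists_color h
  have hu₂A : u₂ j = c (A j) := hu₂C.trans hCj
  have heq {u v : Fin d → S} (hu : IsTwinClass c V j k u) (hPu : P u) (hv : v ∈ V) (hPv : P v)
      (hvu : v j = u j) : v = u := by
    refine ((hu v).1 (mem_letterClass.2 ⟨hv, hvu⟩)).resolve_right ?_
    rintro rfl
    exact (h.color_flip_left u hu.mem k hu.flipAt_mem).1 hPu hPv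
  refine ⟨j, k, u₁, u₂, hu₁, hu₂, hP₁, hP₂, hu₂A.trans (hu₁A ▸ rfl), ?_, fun v hv hPv => ?_⟩
  · refine Set.EqOn.trans ?_ (hX.eqOn_of_apply_eq_compl h hu₂.mem hu₂A).symm
    exact (hX.left.eqOn hu₁.mem hu₁A).mono (by simp)
  · rcases hX.apply_eq_or_eq h hv with hvj | hvj
    · exact .inl (heq hu₁ hP₁ hv hPv (hvj.trans hu₁A.symm))
    · exact .inr (heq hu₂ hP₂ hv hPv (hvj.trans hu₂A.symm))

end TwinCrosses

section Halves

open IsComplementation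

variable {S : Type*} {c : S → S} {d : ℕ} {a i j k j' k' : Fin d} {s t : S} {B : Set S}
  {V W : Finset (Fin d → S)} {u v w u₁ u₂ : Fin d → S}
  {x : Fin d → Set S}

/-- The words of `V` with letter `s` at position `i` are `u₁` and `u₂`, which agree off `{j, k}`,
have complementary letters at `j`, and whose twins at position `k` become words of `V` when `s` is
replaced by `t`. -/
structure HalfShape (c : S → S) (V : Finset (Fin d → S)) (i : Fin d) (s t : S) (j k : Fin d)
    (u₁ u₂ : Fin d → S) : Prop where
  mem_letterClass_iff : ∀ u, u ∈ letterClass V i s ↔ u = u₁ ∨ u = u₂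
  ne : k ≠ j
  eqOn : Set.EqOn u₁ u₂ {j, k}ᶜ
  apply_eq : u₂ j = c (u₁ j)
  apply_ne : u₁ k ≠ u₂ k
  update_mem₁ : update (flipAt c k u₁) i t ∈ V
  update_mem₂ : update (flipAt c k u₂) i t ∈ V

/-- Some `B ∈ ES` containing `s` and `t` contains the letter at position `i` of at most five words
of `V`. -/
def IsSmallHalf (c : S → S) (V : Finset (Fin d → S)) (i : Fin d) (s t : S) : Prop :=
  ∃ B, B ∈ Eltr c s ∧ B ∈ Eltr c t ∧ #(fiber V i B) ≤ 5

theorem IsSmallHalf.symm (h : IsSmallHalf c V i s t) : IsSmallHalf c V i t s := by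
  obtain ⟨B, hs, ht, h5⟩ := h
  exact ⟨B, ht, hs, h5⟩

theorem eqOn_of_eqOn_update (hi : u i = v i) (h : Set.EqOn (update u i s) (update v i s) {a}ᶜ) :
    Set.EqOn u v {a}ᶜ := by
  intro b hb
  rcases eq_or_ne b i with rfl | hbi
  · exact hi
  · simpa only [update_of_ne hbi] using h hb

theorem eq_iff_ne_of_eq_or_eq {p q : S} (hts : t ≠ s) (hp : p = s ∨ p = t) (hq : q = s ∨ q = t)
    (hpq : p ≠ q) : p = s ↔ q ≠ s := by
  rcases hp with rfl | rfl
  · exact iff_of_true rfl hpq.symm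
  · exact iff_of_false hts (not_not_intro (hq.resolve_right hpq.symm))

theorem apply_eq_of_mem_sliceAt (hu : u ∈ sliceAt V i B s) : u i = s := by
  obtain ⟨v, -, -, rfl⟩ := mem_sliceAt.1 hu
  exact update_self ..

theorem lettersAt_sliceAt_self_subset :
    lettersAt (sliceAt V i B s) (sliceAt W i B s) i ⊆ {s} := by
  rintro _ ⟨u, hu | hu, rfl⟩ <;> exact apply_eq_of_mem_sliceAt hu

theorem lettersAt_sliceAt_subset (hai : a ≠ i) :
    lettersAt (sliceAt V i B s) (sliceAt W i B s) a ⊆ lettersAt V W a := by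
  rintro _ ⟨u, hu | hu, rfl⟩ <;> obtain ⟨v, hv, -, rfl⟩ := mem_sliceAt.1 hu
  · exact ⟨v, .inl hv, (update_of_ne hai ..).symm⟩
  · exact ⟨v, .inr hv, (update_of_ne hai ..).symm⟩

theorem atMostTwoPairs_singleton (s : S) : AtMostTwoPairs c {s} :=
  fun _ hr _ _ _ hq _ _ => .inl (hq.trans hr.symm)

theorem NoNearPair.disjoint_sliceAt (h : NoNearPair c V W) (hB : B ∈ ESet c) :
    Disjoint (sliceAt V i B s) (sliceAt W i B s) := by
  refine Finset.disjoint_left.2 fun u hu hu' => ?_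
  obtain ⟨v, hv, hvB, rfl⟩ := mem_sliceAt.1 hu
  obtain ⟨w, hw, hwB, hwv⟩ := mem_sliceAt.1 hu'
  have hoff : Set.EqOn v w {i}ᶜ :=
    (eqOn_update.symm.trans fun a _ => congrFun hwv.symm a).trans eqOn_update
  exact ESet.ne_apply_of_mem hB hvB hwB (h v hv w hw i hoff)

theorem TwinFree.update_compl_notMem (hT : TwinFree c V) (hu : update u i t ∈ V) :
    update u i (c t) ∉ V := by
  have := hT.flipAt_notMem (i := i) hu
  rwa [flipAt, update_self, update_idem] at this

theorem fiber_nonempty_of_apply_eq_compl (hv : v ∈ V) (hu : u ∈ V) (hui : u i = c (v i))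
    (hB : B ∈ ESet c) : (fiber V i B).Nonempty := by
  by_cases hvB : v i ∈ B
  · exact ⟨v, mem_fiber.2 ⟨hv, hvB⟩⟩
  · exact ⟨u, mem_fiber.2 ⟨hu, hui ▸ not_not.1 (mt (hB _).2 hvB)⟩⟩

variable [IsComplementation c]

theorem TwinFree.mem_iff_flipAt_notMem (hT : TwinFree c V)
    (hV : PolyboxCode c (V : Set (Fin d → S))) (hB : B ∈ ESet c) (hs : s ∈ B) (hts : t ≠ s)
    (hletter : ∀ v ∈ V, v i ∈ B → v i = s ∨ v i = t) (hu : u ∈ sliceAt V i B s)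
    (hflip : flipAt c a u ∈ sliceAt V i B s) : u ∈ V ↔ flipAt c a u ∉ V := by
  obtain ⟨v, hv, hvB, rfl⟩ := mem_sliceAt.1 hu
  obtain ⟨v', hv', hvB', hvv'⟩ := mem_sliceAt.1 hflip
  have hai : a ≠ i := by
    rintro rfl
    have hletter := apply_eq_of_mem_sliceAt hflip
    rw [flipAt_self, update_self] at hletter
    exact IsComplementation.apply_ne s hletter
  have hne : v i ≠ v' i := fun hi =>
    hT.flipAt_notMem hv (eq_flipAt_of_update_eq hai hi.symm hvv' ▸ hv')
  rw [← hvv', hV.update_mem_iff hB hs hv hvB, hV.update_mem_iff hB hs hv' hvB']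
  exact eq_iff_ne_of_eq_or_eq hts (hletter v hv hvB) (hletter v' hv' hvB') hne

theorem NoNearPair.mem_iff_notMem (h : NoNearPair c V W)
    (hV : PolyboxCode c (V : Set (Fin d → S))) (hW : PolyboxCode c (W : Set (Fin d → S)))
    (hB : B ∈ ESet c) (hs : s ∈ B) (hts : t ≠ s)
    (hletter : ∀ l ∈ lettersAt V W i, l ∈ B → l = s ∨ l = t) (hv : v ∈ sliceAt V i B s)
    (hw : w ∈ sliceAt W i B s) (hoff : Set.EqOn v w {a}ᶜ) (hne : w a ≠ c (v a)) :
    v ∈ V ↔ w ∉ W := by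
  obtain ⟨v', hv', hvB, rfl⟩ := mem_sliceAt.1 hv
  obtain ⟨w', hw', hwB, rfl⟩ := mem_sliceAt.1 hw
  have hvw : v' i ≠ w' i := by
    intro hi
    have hwa := h v' hv' w' hw' a (eqOn_of_eqOn_update hi hoff)
    rcases eq_or_ne a i with rfl | hai
    · exact ESet.ne_apply_of_mem hB hvB hwB hwa
    · rw [update_of_ne hai, update_of_ne hai] at hne
      exact hne hwa
  rw [hV.update_mem_iff hB hs hv' hvB, hW.update_mem_iff hB hs hw' hwB]
  exact eq_iff_ne_of_eq_or_eq hts (hletter _ ⟨v', .inl hv', rfl⟩ hvB)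
    (hletter _ ⟨w', .inr hw', rfl⟩ hwB) hvw

-- A word of a slice is colored according to whether it belongs to the original code.
theorem SeparatedEquiv.coloredEquiv_sliceAt (h : SeparatedEquiv c V W) (h11 : #V ≤ 11)
    (hB : B ∈ ESet c) (hs : s ∈ B) (hts : t ≠ s)
    (hletter : ∀ l ∈ lettersAt V W i, l ∈ B → l = s ∨ l = t)
    (h5 : #(fiber V i B) ≤ 5) (h0 : (fiber V i B).Nonempty) :
    ColoredEquiv c (sliceAt V i B s) (sliceAt W i B s) (· ∈ V) (· ∈ W) where
  toCodeEquiv := h.toCodeEquiv.slice hB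
  nonempty := by rwa [← Finset.card_pos, h.code_left.card_sliceAt hB, Finset.card_pos]
  card_le := by rwa [h.code_left.card_sliceAt hB]
  color_flip_left _ hu _ := h.twinFree_left.mem_iff_flipAt_notMem h.code_left hB hs hts
    (fun v hv => hletter _ ⟨v, .inl hv, rfl⟩) hu
  color_flip_right _ hu _ := h.twinFree_right.mem_iff_flipAt_notMem h.code_right hB hs hts
    (fun w hw => hletter _ ⟨w, .inr hw, rfl⟩) hu
  color_near _ hv _ hw _ :=
    h.noNearPair.mem_iff_notMem h.code_left h.code_right hB hs hts hletter hv hw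
  disjoint := h.noNearPair.disjoint_sliceAt hB
  twoPairs a := by
    rcases eq_or_ne a i with rfl | hai
    · exact (atMostTwoPairs_singleton s).mono lettersAt_sliceAt_self_subset
    · exact (h.atMostTwoPairs h11 a).mono (lettersAt_sliceAt_subset hai)

theorem PolyboxCode.update_mem_of_notMem (hV : PolyboxCode c (V : Set (Fin d → S)))
    (hB : B ∈ ESet c) (hs : s ∈ B) (hletter : ∀ v ∈ V, v i ∈ B → v i = s ∨ v i = t)
    (hu : u ∈ sliceAt V i B s) (huV : u ∉ V) : update u i t ∈ V := by
  obtain ⟨v, hv, hvB, rfl⟩ := mem_sliceAt.1 hu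
  rw [hV.update_mem_iff hB hs hv hvB] at huV
  rwa [update_idem, ← (hletter v hv hvB).resolve_left huV, update_eq_self]

theorem SeparatedEquiv.exists_halfShape_of_card_fiber_le (h : SeparatedEquiv c V W)
    (h11 : #V ≤ 11) (hB : B ∈ ESet c) (hs : s ∈ B) (hts : t ≠ s)
    (hletter : ∀ l ∈ lettersAt V W i, l ∈ B → l = s ∨ l = t)
    (h5 : #(fiber V i B) ≤ 5) (h0 : (fiber V i B).Nonempty) :
    ∃ j k u₁ u₂, HalfShape c V i s t j k u₁ u₂ := by
  have hcol := h.coloredEquiv_sliceAt h11 hB hs hts hletter h5 h0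
  obtain ⟨j, k, u₁, u₂, hS⟩ := hcol.exists_coloredSquare
  have hupdate {u : Fin d → S} (hu : IsTwinClass c (sliceAt V i B s) j k u) (huV : u ∈ V) :
      update (flipAt c k u) i t ∈ V :=
    h.code_left.update_mem_of_notMem hB hs (fun v hv => hletter _ ⟨v, .inl hv, rfl⟩) hu.flipAt_mem
      ((hcol.color_flip_left u hu.mem k hu.flipAt_mem).1 huV)
  refine ⟨j, k, u₁, u₂, fun u => ⟨fun hu => ?_, ?_⟩, hS.twins₁.ne, hS.eqOn, hS.apply_eq,
    hS.apply_ne hcol, hupdate hS.twins₁ hS.color₁, hupdate hS.twins₂ hS.color₂⟩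
  · obtain ⟨huV, rfl⟩ := mem_letterClass.1 hu
    exact hS.color_eq u (mem_sliceAt.2 ⟨u, huV, hs, update_eq_self ..⟩) huV
  · rintro (rfl | rfl)
    · exact mem_letterClass.2 ⟨hS.color₁, apply_eq_of_mem_sliceAt hS.twins₁.mem⟩
    · exact mem_letterClass.2 ⟨hS.color₂, apply_eq_of_mem_sliceAt hS.twins₂.mem⟩

theorem SeparatedEquiv.exists_halfShape (h : SeparatedEquiv c V W) (h11 : #V ≤ 11)
    (hts : t ≠ s) (hletter : lettersAt V W i ⊆ {s, c s, t, c t})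
    (h0 : ∀ B ∈ ESet c, (fiber V i B).Nonempty) (hsmall : IsSmallHalf c V i s t) :
    ∃ j k u₁ u₂, HalfShape c V i s t j k u₁ u₂ := by
  obtain ⟨B, hs, ht, h5⟩ := hsmall
  refine h.exists_halfShape_of_card_fiber_le h11 hs.1 hs.2 hts (fun l hl hlB => ?_) h5 (h0 B hs.1)
  rcases hletter hl with rfl | rfl | rfl | rfl
  · exact .inl rfl
  · exact absurd hlB (ESet.apply_notMem hs.1 hs.2)
  · exact .inr rfl
  · exact absurd hlB (ESet.apply_notMem hs.1 ht.2)

theorem HalfShape.symm (h : HalfShape c V i s t j k u₁ u₂) : HalfShape c V i s t j k u₂ u₁ where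
  mem_letterClass_iff u := (h.mem_letterClass_iff u).trans or_comm
  ne := h.ne
  eqOn := h.eqOn.symm
  apply_eq := by rw [h.apply_eq, apply_apply c]
  apply_ne := h.apply_ne.symm
  update_mem₁ := h.update_mem₂
  update_mem₂ := h.update_mem₁

theorem flipAt_eq_flipAt (hoff : Set.EqOn u v {j, k}ᶜ) (hj : v j = c (u j))
    (hk : v k = c (u k)) (hkj : k ≠ j) : flipAt c k v = flipAt c j u := by
  refine eq_flipAt (fun b hb => ?_) (by rw [flipAt_of_ne hkj.symm, hj])
  rcases eq_or_ne b k with rfl | hbk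
  · rw [flipAt_self, hk, apply_apply c]
  · rw [flipAt_of_ne hbk]
    exact (hoff (by simp_all)).symm

theorem HalfShape.not_compl (h : HalfShape c V i s t j k u₁ u₂) (hT : TwinFree c V) :
    ¬ HalfShape c V i s (c t) j' k' u₁ u₂ := by
  intro h'
  have hdiff {b : Fin d} (hb : u₁ b ≠ u₂ b) : b = j ∨ b = k := by
    by_contra hjk
    exact hb (h.eqOn hjk)
  have hj' : u₁ j' ≠ u₂ j' := by
    rw [h'.apply_eq]
    exact (IsComplementation.apply_ne _).symm
  rcases hdiff h'.apply_ne with rfl | rfl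
  · obtain rfl := (hdiff hj').resolve_left h'.ne.symm
    have hflip : flipAt c k' u₂ = flipAt c j' u₁ :=
      flipAt_eq_flipAt (Set.pair_comm k' j' ▸ h.eqOn) h'.apply_eq h.apply_eq h'.ne
    exact hT.update_compl_notMem h.update_mem₁ (hflip ▸ h'.update_mem₂)
  · exact hT.update_compl_notMem h.update_mem₁ h'.update_mem₁

theorem SeparatedEquiv.not_isSmallHalf_and_compl (h : SeparatedEquiv c V W) (h11 : #V ≤ 11)
    (hts : t ≠ s) (htcs : t ≠ c s) (hletter : lettersAt V W i ⊆ {s, c s, t, c t})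
    (h0 : ∀ B ∈ ESet c, (fiber V i B).Nonempty) :
    ¬ (IsSmallHalf c V i s t ∧ IsSmallHalf c V i s (c t)) := by
  rintro ⟨hsmall, hsmall'⟩
  obtain ⟨j, k, u₁, u₂, hS⟩ := h.exists_halfShape h11 hts hletter h0 hsmall
  obtain ⟨j', k', y₁, y₂, hS'⟩ := h.exists_halfShape h11
    (fun hcts => htcs (by rw [← hcts, apply_apply c])) (fun l hl => by
      have := hletter hl
      rw [apply_apply c]
      grind) h0 hsmall'
  have hne : y₁ ≠ y₂ := fun heq => hS'.apply_ne (congrFun heq k')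
  have hiff (y : Fin d → S) : y = u₁ ∨ y = u₂ ↔ y = y₁ ∨ y = y₂ :=
    (hS.mem_letterClass_iff y).symm.trans (hS'.mem_letterClass_iff y)
  rcases (hiff y₁).2 (.inl rfl) with rfl | rfl <;> rcases (hiff y₂).2 (.inr rfl) with rfl | rfl
  · exact hne rfl
  · exact hS.not_compl h.twinFree_left hS'
  · exact hS.not_compl h.twinFree_left hS'.symm
  · exact hne rfl

theorem isSmallHalf_or_isSmallHalf_compl (h11 : #V ≤ 11) (htcs : t ≠ c s) (i : Fin d) :
    IsSmallHalf c V i s t ∨ IsSmallHalf c V i (c s) (c t) := by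
  obtain ⟨B, hs, ht⟩ := exists_mem_Eltr₂ htcs
  have hcompl {l : S} (hl : B ∈ Eltr c l) : Bᶜ ∈ Eltr c (c l) :=
    ⟨ESet.compl_mem hl.1, ESet.apply_notMem hl.1 hl.2⟩
  have hcard := card_fiber_add_card_fiber_compl V i B
  rcases le_or_gt #(fiber V i B) 5 with h5 | h5
  · exact .inl ⟨B, hs, ht, h5⟩
  · exact .inr ⟨Bᶜ, hcompl hs, hcompl ht, by omega⟩

theorem CodeEquiv.exists_apply_eq_compl (h : CodeEquiv c V W) (hv : v ∈ V) (hw : w ∈ W)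
    (hxv : x ∈ realize c v) (hxw : x ∈ realize c w) (hi : w i ≠ v i) : ∃ u ∈ V, u i = c (v i) := by
  obtain ⟨w', hw', hwi, hxw'⟩ | ⟨u, hu, hui, -⟩ :=
    h.exists_same_or_complementary_letter hv (realize_subset_cylinder (i := i) hxv)
  · have hww' : w' = w := h.code_right.eq_of_mem_cylinder hw' hw hxw'
      (realize_subset_cylinder hxw) (hwi ▸ ESet.ne_apply_of_mem (hxv i).1 (hxv i).2 (hxw i).2)
    exact absurd (hww' ▸ hwi) hi
  · exact ⟨u, hu, hui⟩

theorem SeparatedEquiv.twelve_le_card_of_lettersAt_subset (h : SeparatedEquiv c V W)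
    (hts : t ≠ s) (htcs : t ≠ c s) (hletter : lettersAt V W i ⊆ {s, c s, t, c t})
    (h0 : ∀ B ∈ ESet c, (fiber V i B).Nonempty) : 12 ≤ #V := by
  by_contra! hlt
  have h11 : #V ≤ 11 := Nat.le_of_lt_succ hlt
  have hcts : c t ≠ c s := involutive.injective.ne hts
  have hnot {p q : S} (hqp : q ≠ p) (hqcp : q ≠ c p)
      (hpq : ({s, c s, t, c t} : Set S) ⊆ {p, c p, q, c q}) :
      ¬ (IsSmallHalf c V i p q ∧ IsSmallHalf c V i p (c q)) :=
    h.not_isSmallHalf_and_compl h11 hqp hqcp (hletter.trans hpq) h0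
  have hcompl : IsSmallHalf c V i s (c t) ∨ IsSmallHalf c V i (c s) t := by
    simpa only [apply_apply c] using isSmallHalf_or_isSmallHalf_compl h11 hcts i
  rcases isSmallHalf_or_isSmallHalf_compl h11 htcs i with hst | hst <;>
    rcases hcompl with hst' | hst'
  · exact hnot hts htcs subset_rfl ⟨hst, hst'⟩
  · exact hnot hts.symm (ne_apply_comm.1 htcs) (by grind) ⟨hst.symm, hst'.symm⟩
  · exact hnot (ne_apply_comm.1 htcs) (by rwa [apply_apply c, ne_comm])
      (by rw [apply_apply c]; grind) ⟨hst'.symm, hst.symm⟩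
  · exact hnot htcs (by rwa [apply_apply c]) (by rw [apply_apply c]; grind) ⟨hst', hst⟩

theorem SeparatedEquiv.twelve_le_card (h : SeparatedEquiv c V W) (hdisj : Disjoint V W)
    (h0 : V.Nonempty) : 12 ≤ #V := by
  by_contra! hlt
  obtain ⟨v, hv⟩ := h0
  obtain ⟨x, hxv⟩ := realize_nonempty (c := c) v
  obtain ⟨w, hw, hxw⟩ := h.covers_right v hv x hxv
  obtain ⟨i, hi⟩ := Function.ne_iff.1 (Finset.disjoint_iff_ne.1 hdisj v hv w hw).symm
  obtain ⟨u, hu, hui⟩ := h.exists_apply_eq_compl hv hw hxv hxw hi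
  have hic : w i ≠ c (v i) := ESet.ne_apply_of_mem (hxv i).1 (hxv i).2 (hxw i).2
  refine hlt.not_ge (h.twelve_le_card_of_lettersAt_subset hi hic (fun q hq => ?_) fun B =>
    fiber_nonempty_of_apply_eq_compl hv hu hui)
  exact h.atMostTwoPairs (Nat.le_of_lt_succ hlt) i _ ⟨v, .inl hv, rfl⟩ _ ⟨w, .inr hw, rfl⟩ q hq
    hi hic

end Halves

section Main

variable {S : Type*} {c : S → S} {d : ℕ} {V W : Finset (Fin d → S)} {A : Set (Fin d → S)}

theorem Equivalent.covers (h : Equivalent c A W) : ∀ v ∈ A, Covers c W v := by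
  intro v hv x hx
  have hxW : x ∈ ⋃ w ∈ (W : Set (Fin d → S)), realize c w := h ▸ Set.mem_biUnion hv hx
  simpa only [Set.mem_iUnion₂, exists_prop, Finset.mem_coe] using hxW

variable [IsComplementation c]

theorem CodeEquiv.twelve_le_card (h : CodeEquiv c V W) (hTV : TwinFree c V) (hTW : TwinFree c W)
    (hdisj : Disjoint V W) (h0 : V.Nonempty) : 12 ≤ #V := by
  by_cases hnear : NoNearPair c V W
  · exact SeparatedEquiv.twelve_le_card ⟨h, hTV, hTW, hnear⟩ hdisj h0
  · simp only [NoNearPair, not_forall] at hnear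
    obtain ⟨v, hv, w, hw, a, hoff, hne⟩ := hnear
    refine h.twelve_le_card_of_near hTV hTW hv hw hoff (fun ha => ?_) hne
    exact Finset.disjoint_iff_ne.1 hdisj v hv w hw (eq_of_eqOn_compl_singleton hoff ha.symm)

theorem PolyboxCode.finite_of_equivalent (hA : PolyboxCode c A) (h : Equivalent c A W) :
    A.Finite := by
  by_contra hinf
  obtain ⟨F, hFA, hF⟩ := Set.Infinite.exists_subset_card_eq hinf (#W + 1)
  have := (hA.mono hFA).card_le_of_covers fun v hv => h.covers v (hFA hv)
  omega

end Main

theorem twelve_le_card_of_equiv_disjoint_general {S : Type*} (c : S → S)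
    (hinv : ∀ s, c (c s) = s) (hne : ∀ s, c s ≠ s) {d : ℕ} (V W : Set (Fin d → S))
    (hV : PolyboxCode c V) (hW : PolyboxCode c W) (hequiv : Equivalent c V W)
    (hVtf : ∀ u ∈ V, ∀ v ∈ V, ¬ TwinPair c u v) (hWtf : ∀ u ∈ W, ∀ v ∈ W, ¬ TwinPair c u v)
    (hdisj : V ∩ W = ∅) (hVne : V.Nonempty) : 12 ≤ V.encard := by
  have : IsComplementation c := ⟨hinv, hne⟩
  by_cases hVfin : V.Finite
  · lift V to Finset (Fin d → S) using hVfin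
    have hWfin : W.Finite := hW.finite_of_equivalent hequiv.symm
    lift W to Finset (Fin d → S) using hWfin
    have h : CodeEquiv c V W := ⟨hV, hW, Equivalent.covers hequiv.symm, Equivalent.covers hequiv⟩
    rw [← Set.disjoint_iff_inter_eq_empty, Finset.disjoint_coe] at hdisj
    rw [Set.encard_coe_eq_coe_finsetCard]
    exact_mod_cast h.twelve_le_card hVtf hWtf hdisj hVne
  · rw [Set.Infinite.encard_eq hVfin]
    exact le_top

/-- If `V, W ⊆ S^d` are disjoint, equivalent, twin-pair-free polybox codes and
`V ≠ ∅`, then `|V| ≥ 12`. -/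
theorem twelve_le_card_of_equiv_disjoint {S : Type*} [Fintype S] (c : S → S)
    (hinv : ∀ s, c (c s) = s) (hne : ∀ s, c s ≠ s) {d : ℕ}
    (V W : Set (Fin d → S))
    (hV : PolyboxCode c V) (hW : PolyboxCode c W)
    (hequiv : Equivalent c V W)
    (hVtf : ∀ u ∈ V, ∀ v ∈ V, ¬ TwinPair c u v)
    (hWtf : ∀ u ∈ W, ∀ v ∈ W, ¬ TwinPair c u v)
    (hdisj : V ∩ W = ∅) (hVne : V.Nonempty) :
    12 ≤ V.ncard := by
  rw [← Nat.ofNat_le_cast (α := ℕ∞), V.toFinite.cast_ncard_eq]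
  exact twelve_le_card_of_equiv_disjoint_general c hinv hne V W hV hW hequiv hVtf hWtf hdisj hVne
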